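/- arXiv:2411.11404 — 3 statements merged into one kernel-verified Lean document; each statement's English description precedes it below -/
import Mathlib

section
/- For all integers J ≥ 0 and N ≥ 0, MO(2, 25J+12; 625N+250) ≡ 0 (mod 5) and MO(2, 25J+12; 625N+375) ≡ 0 (mod 5). -/
/-!
Let `ψ(q) = ∑ q ^ (n (n + 1) / 2)`. The proof has three ingredients.

*Reduction to `pod`.* Put `t = 25 J + 12`. The last two base 5 digits of `2 t` are `4, 4`, so by
Lucas's theorem `C(n + t, 2 t)` is divisible by 5 unless `n ≡ 12` modulo 25
(`five_dvd_choose`). For `n = 25 m + 12` the triangular number of `n` is `625 m (m + 1) / 2 + 78`,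
so it remains to show that 5 divides `pod (625 n + 172)` and `pod (625 n + 297)`.

*Generating function.* By Gauss's product formula, obtained here from a finite identity of Shanks
(`shanks`), the series `∑ (-1) ^ k pod(k) q ^ k` is `1 / ψ(q)` (`podSeries_mul_psi`).

*Sections modulo 5.* Let `sec r` extract the exponents `5 n + r` and let `A = sec 0 ψ`,
`B = sec 1 ψ`. Then `ψ = A(q⁵) + q B(q⁵) + q³ ψ(q²⁵)`, and Ramanujan's identity
`ψ² = A B + q ψ(q⁵)²` holds (`ramanujan`); modulo 5 one also has `ψ⁵ = ψ(q⁵)`. These give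
`sec 2 (ψ⁴) = ψ⁴`, hence `sec 2 (1 / ψ) = sec 2 (ψ⁴ / ψ(q⁵)) = ψ³`; next
`sec 4 (ψ³) = ψ² ψ(q⁵)` and `sec 1 (ψ² ψ(q⁵)) = 2 ψ³ - q ψ ψ(q⁵)²`. The sections 1 and 2 of the
last series are `6 A ψ² - A ψ²` and `6 B ψ² - B ψ²`, which vanish modulo 5 (`sec_podSeries`).

Ramanujan's identity is proved by counting: the coefficients of its three terms count integer
points with coordinates congruent to 1 modulo 4 on the circles of squared radius `8 N + 2`,
`40 N + 10` (with one square `1` and the other `4` modulo 5) and `8 (N - 1) / 5 + 2`.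
Multiplication by a Gaussian integer of norm 5 matches the first kind with the points `(u, v)` on
the second circle satisfying `v ≡ 2 u` modulo 5. Such points prime to 5 are the second kind up to
a swap of coordinates, and those divisible by 5 are five times the third kind.
-/

open Finset

noncomputable section

/-- `p(k)`: the number of integer partitions of `k`. -/
def numPartitions (k : ℕ) : ℕ := Nat.card (Nat.Partition k)

/-- `pod(k)`: the number of partitions of `k` in which the odd parts are distinct
(even parts may repeat). -/
def pod (k : ℕ) : ℕ :=
  Nat.card {p : Nat.Partition k // ∀ i ∈ p.parts, Odd i → p.parts.count i ≤ 1}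

/-- `p₋₃(k)`: the number of 3-colored partitions of `k`, i.e. ordered triples
`(λ₁, λ₂, λ₃)` of partitions with `|λ₁| + |λ₂| + |λ₃| = k`. -/
def p3 (k : ℕ) : ℕ :=
  Nat.card {x : (Σ a : ℕ, Nat.Partition a) × (Σ a : ℕ, Nat.Partition a) ×
      (Σ a : ℕ, Nat.Partition a) // x.1.1 + x.2.1.1 + x.2.2.1 = k}

/-- `c1(n, t) = ∑_{k=0}^{n} (−1)^{n+k} (C(n+k+1, 2k+1) + C(n+k, 2k+1)) C(k, t) 3^{k−t}`
(for `k < t` the binomial `C(k, t)` vanishes, so the truncated exponent `k - t` is harmless). -/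
def c1 (n t : ℕ) : ℤ :=
  ∑ k ∈ Finset.range (n + 1),
    (-1 : ℤ) ^ (n + k) *
      (((n + k + 1).choose (2 * k + 1) : ℤ) + ((n + k).choose (2 * k + 1) : ℤ)) *
      (k.choose t : ℤ) * 3 ^ (k - t)

/-- `cm1(n, t) = ∑_{k=0}^{n} (−1)^{n+k} (C(n+k+1, 2k+1) + C(n+k, 2k+1)) C(k, t)`. -/
def cm1 (n t : ℕ) : ℤ :=
  ∑ k ∈ Finset.range (n + 1),
    (-1 : ℤ) ^ (n + k) *
      (((n + k + 1).choose (2 * k + 1) : ℤ) + ((n + k).choose (2 * k + 1) : ℤ)) *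
      (k.choose t : ℤ)

/-- `cm2(n, t) = (−1)^{n+t} (C(n+t, 2t) + 2 C(n+t, 2t+1))`. -/
def cm2 (n t : ℕ) : ℤ :=
  (-1 : ℤ) ^ (n + t) * (((n + t).choose (2 * t) : ℤ) + 2 * ((n + t).choose (2 * t + 1) : ℤ))

/-- `c0(n, t) = (−1)^{n+⌊(n+t)/2⌋} C(⌊(n+t)/2⌋, t)`. -/
def c0 (n t : ℕ) : ℤ :=
  (-1 : ℤ) ^ (n + (n + t) / 2) * (((n + t) / 2).choose t : ℤ)

/-- `MO(1, t; N) = ∑ p(k) · c1(n, t)`, summed over all pairs of nonnegative integers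
`(k, n)` with `3k + n(n+1)/2 = N` (all such pairs satisfy `k ≤ N` and `n ≤ N`). -/
def MO1 (t N : ℕ) : ℤ :=
  ∑ kn ∈ (Finset.range (N + 1) ×ˢ Finset.range (N + 1)).filter
      (fun kn => 3 * kn.1 + kn.2 * (kn.2 + 1) / 2 = N),
    (numPartitions kn.1 : ℤ) * c1 kn.2 t

/-- `MO(−1, t; N) = ∑ B̄₃(k) · cm1(n, t)`, summed over all pairs of nonnegative integers
`(k, n)` with `k + n(n+1)/2 = N`, where `B3` is the coefficient function of
`f₂ f₃ / (f₁² f₆)`. -/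
def MOm1 (B3 : ℕ → ℤ) (t N : ℕ) : ℤ :=
  ∑ kn ∈ (Finset.range (N + 1) ×ˢ Finset.range (N + 1)).filter
      (fun kn => kn.1 + kn.2 * (kn.2 + 1) / 2 = N),
    B3 kn.1 * cm1 kn.2 t

/-- `MO(2, t; N) = ∑ (−1)^k pod(k) · C(n+t, 2t)`, summed over all pairs of nonnegative
integers `(k, n)` with `k + n(n+1)/2 = N`. -/
def MO2 (t N : ℕ) : ℤ :=
  ∑ kn ∈ (Finset.range (N + 1) ×ˢ Finset.range (N + 1)).filter
      (fun kn => kn.1 + kn.2 * (kn.2 + 1) / 2 = N),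
    (-1 : ℤ) ^ kn.1 * (pod kn.1 : ℤ) * ((kn.2 + t).choose (2 * t) : ℤ)

/-- `MO(−2, t; N) = ∑ p₋₃(k) · cm2(n, t)`, summed over all pairs of nonnegative
integers `(k, n)` with `k + n(n+1)/2 = N`. -/
def MOm2 (t N : ℕ) : ℤ :=
  ∑ kn ∈ (Finset.range (N + 1) ×ˢ Finset.range (N + 1)).filter
      (fun kn => kn.1 + kn.2 * (kn.2 + 1) / 2 = N),
    (p3 kn.1 : ℤ) * cm2 kn.2 t

/-- `MO(0, t; N) = ∑ pod(k) · c0(n, t)`, summed over all pairs of nonnegative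
integers `(k, n)` with `k + n(n+1)/2 = N`. -/
def MO0 (t N : ℕ) : ℤ :=
  ∑ kn ∈ (Finset.range (N + 1) ×ˢ Finset.range (N + 1)).filter
      (fun kn => kn.1 + kn.2 * (kn.2 + 1) / 2 = N),
    (pod kn.1 : ℤ) * c0 kn.2 t

open PowerSeries

instance fact_prime_five : Fact (Nat.Prime 5) := ⟨by norm_num⟩

/-! ### Gauss's product for the theta function -/

/-- Ramanujan's theta function `ψ(q) = ∑ q ^ (n (n + 1) / 2)` with coefficients in `ZMod 5`; the
exponents are encoded through the fact that `d` is triangular if and only if `8 d + 1` is a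
square. -/
def psi : (ZMod 5)⟦X⟧ := PowerSeries.mk fun d => if IsSquare (8 * d + 1) then 1 else 0

/-- The ratio `(1 - q ^ (2 k + 2)) / (1 - q ^ (2 k + 1))`. -/
def ratio (k : ℕ) : (ZMod 5)⟦X⟧ := (1 - X ^ (2 * k + 2)) * (1 - X ^ (2 * k + 1))⁻¹

lemma odd_factor_mul_inv (k : ℕ) :
    ((1 : (ZMod 5)⟦X⟧) - X ^ (2 * k + 1)) * (1 - X ^ (2 * k + 1))⁻¹ = 1 :=
  PowerSeries.mul_inv_cancel _ (by simp)

lemma tri_even (n : ℕ) : (2 * n) * (2 * n + 1) / 2 = n * (2 * n + 1) := by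
  rw [mul_assoc]; exact Nat.mul_div_cancel_left _ (by norm_num)

lemma tri_odd (n : ℕ) : (2 * n + 1) * (2 * n + 1 + 1) / 2 = (n + 1) * (2 * n + 1) := by
  rw [show (2 * n + 1) * (2 * n + 1 + 1) = 2 * ((n + 1) * (2 * n + 1)) by ring]
  exact Nat.mul_div_cancel_left _ (by norm_num)

/-- Shanks' finite form of Gauss's identity. In the induction step the difference of the right-hand
sides telescopes. -/
lemma shanks (n : ℕ) :
    ∑ j ∈ range (2 * n), (X : (ZMod 5)⟦X⟧) ^ (j * (j + 1) / 2) =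
      ∑ s ∈ range n, (∏ k ∈ Ico s n, ratio k) * X ^ (s * (2 * n + 1)) := by
  induction n with
  | zero => simp
  | succ n ih =>
    set v : (ZMod 5)⟦X⟧ := (1 - X ^ (2 * n + 1))⁻¹ with hv
    have hv1 : ((1 : (ZMod 5)⟦X⟧) - X ^ (2 * n + 1)) * v = 1 := odd_factor_mul_inv n
    let w : ℕ → (ZMod 5)⟦X⟧ := fun s =>
      (∏ k ∈ Ico s n, ratio k) * v * X ^ (s * (2 * n + 1)) * (1 - X ^ (2 * s))
    have hw : ∀ s < n, (∏ k ∈ Ico s (n + 1), ratio k) * X ^ (s * (2 * (n + 1) + 1)) -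
        (∏ k ∈ Ico s n, ratio k) * X ^ (s * (2 * n + 1)) = w (s + 1) - w s := by
      intro s hs
      have h1 : ∏ k ∈ Ico s (n + 1), ratio k =
          (∏ k ∈ Ico s n, ratio k) * ((1 - X ^ (2 * n + 2)) * v) :=
        Finset.prod_Ico_succ_top hs.le _
      have h2 : (∏ k ∈ Ico (s + 1) n, ratio k) * (1 - X ^ (2 * s + 2)) =
          (∏ k ∈ Ico s n, ratio k) * (1 - X ^ (2 * s + 1)) := by
        rw [Finset.prod_eq_prod_Ico_succ_bot hs, ratio]
        linear_combination -(∏ k ∈ Ico (s + 1) n, ratio k) * (1 - X ^ (2 * s + 2)) *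
          odd_factor_mul_inv s
      have h3 : w (s + 1) = (∏ k ∈ Ico s n, ratio k) * (1 - X ^ (2 * s + 1)) * v *
          X ^ ((s + 1) * (2 * n + 1)) := by
        rw [← h2]; simp only [w]; ring
      rw [h1, h3]
      simp only [w]
      linear_combination (∏ k ∈ Ico s n, ratio k) * X ^ (s * (2 * n + 1)) * hv1
    have hsum := Finset.sum_congr rfl fun s hs => hw s (Finset.mem_range.mp hs)
    rw [Finset.sum_range_sub, Finset.sum_sub_distrib, ← ih] at hsum
    rw [Finset.sum_range_succ, show 2 * (n + 1) = 2 * n + 1 + 1 by ring, Finset.sum_range_succ,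
      Finset.sum_range_succ, tri_even, tri_odd]
    rw [show 2 * (n + 1) = 2 * n + 1 + 1 by ring] at hsum
    have hlast : ∏ k ∈ Ico n (n + 1), ratio k = (1 - X ^ (2 * n + 2)) * v := by
      simp [ratio, hv]
    have hwn : w n = v * X ^ (n * (2 * n + 1)) * (1 - X ^ (2 * n)) := by simp [w]
    have hw0 : w 0 = 0 := by simp [w]
    rw [hlast]
    rw [hwn, hw0] at hsum
    linear_combination -hsum - X ^ (n * (2 * n + 1)) * (1 + X ^ (2 * n + 1)) * hv1

lemma isSquare_tri (j : ℕ) : IsSquare (8 * (j * (j + 1) / 2) + 1) := by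
  have h : j * (j + 1) / 2 * 2 = j * (j + 1) := Nat.div_mul_cancel (Nat.even_mul_succ_self j).two_dvd
  exact ⟨2 * j + 1, by linarith⟩

lemma exists_tri_of_isSquare {d : ℕ} (h : IsSquare (8 * d + 1)) : ∃ j, d = j * (j + 1) / 2 := by
  obtain ⟨r, hr⟩ := h
  obtain ⟨j, rfl | rfl⟩ := Nat.even_or_odd' r
  · exfalso
    have : 2 * (2 * (j * j)) = 8 * d + 1 := by rw [hr]; ring
    lia
  · refine ⟨j, ?_⟩
    have : 2 * d = j * (j + 1) := by linarith
    omega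

lemma le_tri (j : ℕ) : j ≤ j * (j + 1) / 2 := by
  rw [Nat.le_div_iff_mul_le (by norm_num)]
  rcases Nat.eq_zero_or_pos j with rfl | h
  · simp
  · exact Nat.mul_le_mul_left _ (by omega)

lemma tri_strictMono : StrictMono fun j : ℕ => j * (j + 1) / 2 := by
  refine strictMono_nat_of_lt_succ fun j => ?_
  show j * (j + 1) / 2 < (j + 1) * (j + 1 + 1) / 2
  rw [show (j + 1) * (j + 1 + 1) = j * (j + 1) + 2 * (j + 1) by ring,
    Nat.add_mul_div_left _ _ (by norm_num)]
  omega

lemma coeff_sum_tri {d m : ℕ} (h : d < m) :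
    coeff d (∑ j ∈ range m, (X : (ZMod 5)⟦X⟧) ^ (j * (j + 1) / 2)) = coeff d psi := by
  rw [map_sum, psi, coeff_mk]
  simp_rw [coeff_X_pow]
  split_ifs with hd
  · obtain ⟨j, rfl⟩ := exists_tri_of_isSquare hd
    rw [Finset.sum_eq_single j, if_pos rfl]
    · intro i _ hij
      exact if_neg fun h => hij (tri_strictMono.injective h.symm)
    · intro hj
      exact absurd (Finset.mem_range.mpr ((le_tri j).trans_lt h)) hj
  · refine Finset.sum_eq_zero fun j _ => if_neg ?_
    rintro rfl
    exact hd (isSquare_tri j)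

/-- The partial products of Gauss's product for `ψ` agree with `ψ` to increasing order. -/
lemma coeff_prod_ratio {d n : ℕ} (h : d < 2 * n) :
    coeff d (∏ k ∈ range n, ratio k) = coeff d psi := by
  rw [← coeff_sum_tri h, shanks]
  obtain ⟨n, rfl⟩ : ∃ m, n = m + 1 := ⟨n - 1, by omega⟩
  rw [Finset.sum_range_succ', map_add, map_sum, Finset.sum_eq_zero, zero_add]
  · simp
  · intro s _
    rw [coeff_mul_X_pow', if_neg]
    have : 2 * (n + 1) + 1 ≤ (s + 1) * (2 * (n + 1) + 1) := Nat.le_mul_of_pos_left _ (by omega)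
    omega

/-! ### The generating function of `pod` -/

/-- The weight of a part `i` occurring `c` times in the generating function of
`(-1) ^ k * pod k`. -/
def podWeight (i c : ℕ) : ZMod 5 := if Odd i → c ≤ 1 then (-1) ^ (c * i) else 0

/-- The generating function of `(-1) ^ k * pod k` modulo 5. -/
def podSeries : (ZMod 5)⟦X⟧ := PowerSeries.mk fun k => (-1) ^ k * (pod k : ZMod 5)

/-- Each partition contributes the product of the weights of its parts, since the parts add up to
`k`. -/
lemma podSeries_eq : podSeries = Nat.Partition.genFun podWeight := by
  classical
  ext k
  rw [podSeries, coeff_mk, Nat.Partition.coeff_genFun]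
  have h : ∀ p : Nat.Partition k, p.parts.toFinsupp.prod podWeight =
      if ∀ i ∈ p.parts, Odd i → p.parts.count i ≤ 1 then (-1) ^ k else 0 := by
    intro p
    rw [Finsupp.prod, Multiset.toFinsupp_support]
    simp only [Multiset.toFinsupp_apply]
    split_ifs with hp
    · have hw : ∀ i ∈ p.parts.toFinset,
          podWeight i (p.parts.count i) = (-1) ^ (p.parts.count i * i) := fun i hi => by
        rw [podWeight, if_pos (hp i (Multiset.mem_toFinset.mp hi)), mul_comm]
      rw [Finset.prod_congr rfl hw, Finset.prod_pow_eq_pow_sum]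
      congr 1
      have := Finset.sum_multiset_count p.parts
      rw [p.parts_sum] at this
      simpa using this.symm
    · push Not at hp
      obtain ⟨i, hi, ho, hc⟩ := hp
      refine Finset.prod_eq_zero (Multiset.mem_toFinset.mpr hi) ?_
      rw [podWeight, if_neg fun h => absurd (h ho) (not_le.mpr hc)]
  simp_rw [h]
  rw [← Finset.sum_filter, Finset.sum_const, nsmul_eq_mul, mul_comm, pod, Nat.card_eq_fintype_card,
    Fintype.card_subtype]

open scoped PowerSeries.WithPiTopology in
/-- Gauss: `ψ(q) = ∏ (1 - q ^ (2 k + 2)) / (1 - q ^ (2 k + 1))`, whose inverse is the generating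
function of `(-1) ^ k * pod k`. -/
lemma podSeries_mul_psi : podSeries * psi = 1 := by
  let _ : TopologicalSpace (ZMod 5) := ⊥
  have _ : DiscreteTopology (ZMod 5) := ⟨rfl⟩
  let g : ℕ → (ZMod 5)⟦X⟧ := fun i =>
    1 + ∑' j, podWeight (i + 1) (j + 1) • X ^ ((i + 1) * (j + 1))
  have hg : HasProd g podSeries := by
    rw [podSeries_eq]; exact Nat.Partition.hasProd_genFun podWeight
  -- The odd part `2 k + 1` contributes `1 - q ^ (2 k + 1)`.
  have hodd (k : ℕ) : g (2 * k) = 1 - X ^ (2 * k + 1) := by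
    simp only [g]
    rw [tsum_eq_single 0]
    · simp [podWeight, pow_succ, pow_mul, sub_eq_add_neg]
    · intro j hj
      have : ¬ (Odd (2 * k + 1) → j + 1 ≤ 1) := by
        simp only [odd_two_mul_add_one, forall_const]; omega
      rw [podWeight, if_neg this, zero_smul]
  -- The even part `2 k + 2` contributes a geometric series.
  have heven (k : ℕ) : g (2 * k + 1) * (1 - X ^ (2 * k + 2)) = 1 := by
    have h0 : constantCoeff ((X : (ZMod 5)⟦X⟧) ^ (2 * k + 2)) = 0 := by simp
    have hgeo := WithPiTopology.tsum_pow_mul_one_sub_of_constantCoeff_eq_zero h0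
    refine Eq.trans ?_ hgeo
    congr 1
    rw [(WithPiTopology.summable_pow_of_constantCoeff_eq_zero h0).tsum_eq_zero_add, pow_zero]
    simp only [g]
    congr 1
    refine tsum_congr fun j => ?_
    have h1 : ¬ Odd (2 * k + 1 + 1) := by
      rw [Nat.not_odd_iff_even]; exact ⟨k + 1, by ring⟩
    have h2 : Even ((j + 1) * (2 * k + 1 + 1)) := ⟨(j + 1) * (k + 1), by ring⟩
    rw [podWeight, if_pos (fun h => absurd h h1), h2.neg_one_pow, one_smul, ← pow_mul]
  have hprod (n : ℕ) : (∏ i ∈ range (2 * n), g i) * ∏ k ∈ range n, ratio k = 1 := by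
    induction n with
    | zero => simp
    | succ n ih =>
      rw [show 2 * (n + 1) = 2 * n + 1 + 1 by ring, Finset.prod_range_succ, Finset.prod_range_succ,
        Finset.prod_range_succ, hodd, ratio]
      calc _ = ((∏ i ∈ range (2 * n), g i) * ∏ k ∈ range n, ratio k) *
            ((1 - X ^ (2 * n + 1)) * (1 - X ^ (2 * n + 1))⁻¹) *
            (g (2 * n + 1) * (1 - X ^ (2 * n + 2))) := by ring
        _ = 1 := by rw [ih, odd_factor_mul_inv, heven]; simp
  have h1 : Filter.Tendsto (fun n => ∏ i ∈ range (2 * n), g i) Filter.atTop (nhds podSeries) :=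
    hg.tendsto_prod_nat.comp (Filter.tendsto_id.const_mul_atTop' (by norm_num))
  have h2 : Filter.Tendsto (fun n => ∏ k ∈ range n, ratio k) Filter.atTop (nhds psi) := by
    rw [WithPiTopology.tendsto_iff_coeff_tendsto]
    exact fun d => tendsto_atTop_of_eventually_const (i₀ := d + 1)
      fun n hn => coeff_prod_ratio (by omega)
  have h3 := h1.mul h2
  simp_rw [hprod] at h3
  exact tendsto_nhds_unique h3 tendsto_const_nhds

/-! ### Sections of power series modulo 5 -/

/-- The `r`-th section of a power series modulo 5: it extracts the exponents `5 n + r`. -/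
def sec (r : ℕ) : (ZMod 5)⟦X⟧ →ₗ[ZMod 5] (ZMod 5)⟦X⟧ where
  toFun f := PowerSeries.mk fun n => coeff (5 * n + r) f
  map_add' f g := by ext; simp
  map_smul' c f := by ext; simp

@[simp] lemma coeff_sec (r n : ℕ) (f : (ZMod 5)⟦X⟧) : coeff n (sec r f) = coeff (5 * n + r) f := by
  simp [sec]

/-- The substitution `q ↦ q ^ 5`. -/
abbrev E5 : (ZMod 5)⟦X⟧ →ₐ[ZMod 5] (ZMod 5)⟦X⟧ := PowerSeries.expand 5 (by norm_num)

lemma coeff_X_pow_mul_E5 {s n r : ℕ} (hs : s < 5) (hr : r < 5) (g : (ZMod 5)⟦X⟧) :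
    coeff (5 * n + r) (X ^ s * E5 g) = if r = s then coeff n g else 0 := by
  rw [coeff_X_pow_mul']
  split_ifs with h1 h2 h2
  · subst h2
    rw [Nat.add_sub_cancel, coeff_expand_mul]
  · rw [coeff_expand_of_not_dvd]; omega
  · omega
  · rfl

/-- Sections read off the components of a 5-dissection. -/
lemma sec_dissection (g₀ g₁ g₂ g₃ g₄ : (ZMod 5)⟦X⟧) :
    let f := E5 g₀ + X * E5 g₁ + X ^ 2 * E5 g₂ + X ^ 3 * E5 g₃ + X ^ 4 * E5 g₄
    sec 0 f = g₀ ∧ sec 1 f = g₁ ∧ sec 2 f = g₂ ∧ sec 3 f = g₃ ∧ sec 4 f = g₄ := by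
  intro f
  have hf : f = X ^ 0 * E5 g₀ + X ^ 1 * E5 g₁ + X ^ 2 * E5 g₂ + X ^ 3 * E5 g₃ + X ^ 4 * E5 g₄ := by
    simp [f]
  have h0 (n : ℕ) : 5 * n = 5 * n + 0 := rfl
  refine ⟨?_, ?_, ?_, ?_, ?_⟩ <;> ext n <;>
    simp only [coeff_sec, hf, map_add] <;>
    simp only [coeff_X_pow_mul_E5 (show (0 : ℕ) < 5 by norm_num),
      coeff_X_pow_mul_E5 (show (1 : ℕ) < 5 by norm_num),
      coeff_X_pow_mul_E5 (show (2 : ℕ) < 5 by norm_num),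
      coeff_X_pow_mul_E5 (show (3 : ℕ) < 5 by norm_num),
      coeff_X_pow_mul_E5 (show (4 : ℕ) < 5 by norm_num), Nat.reduceLT, Nat.ofNat_pos] <;>
    norm_num

lemma dissection (f : (ZMod 5)⟦X⟧) :
    f = E5 (sec 0 f) + X * E5 (sec 1 f) + X ^ 2 * E5 (sec 2 f) + X ^ 3 * E5 (sec 3 f) +
      X ^ 4 * E5 (sec 4 f) := by
  ext m
  have hm : m = 5 * (m / 5) + m % 5 := by omega
  have hlt : m % 5 < 5 := Nat.mod_lt _ (by norm_num)
  have h := sec_dissection (sec 0 f) (sec 1 f) (sec 2 f) (sec 3 f) (sec 4 f)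
  obtain ⟨h0, h1, h2, h3, h4⟩ := h
  generalize m % 5 = r at hm hlt
  generalize m / 5 = n at hm
  subst hm
  simp only [← coeff_sec]
  interval_cases r
  · rw [h0]
  · rw [h1]
  · rw [h2]
  · rw [h3]
  · rw [h4]

/-- Frobenius for power series over `ZMod 5`. -/
lemma pow_five (f : (ZMod 5)⟦X⟧) : f ^ 5 = E5 f := by
  have h := MvPowerSeries.map_frobenius_expand (σ := Unit) (R := ZMod 5) 5 (by norm_num) (f := f)
  rw [ZMod.frobenius_zmod] at h
  exact h.symm.trans (by ext; simp [PowerSeries.expand])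

/-- Sections are linear over series in `q ^ 5`. -/
lemma sec_mul_E5 (f g : (ZMod 5)⟦X⟧) :
    sec 0 (f * E5 g) = sec 0 f * g ∧ sec 1 (f * E5 g) = sec 1 f * g ∧
    sec 2 (f * E5 g) = sec 2 f * g ∧ sec 3 (f * E5 g) = sec 3 f * g ∧
    sec 4 (f * E5 g) = sec 4 f * g := by
  have h := sec_dissection (sec 0 f * g) (sec 1 f * g) (sec 2 f * g) (sec 3 f * g) (sec 4 f * g)
  have e : f * E5 g = E5 (sec 0 f * g) + X * E5 (sec 1 f * g) + X ^ 2 * E5 (sec 2 f * g) +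
      X ^ 3 * E5 (sec 3 f * g) + X ^ 4 * E5 (sec 4 f * g) := by
    conv_lhs => rw [dissection f]
    simp only [map_mul]
    ring
  rw [e]
  exact h

lemma coeff_psi (n : ℕ) : coeff n psi = if IsSquare (8 * n + 1) then 1 else 0 := by
  simp [psi]

lemma not_isSquare_of_mod {m : ℕ} (h : m % 5 = 2 ∨ m % 5 = 3) : ¬ IsSquare m := by
  rintro ⟨r, rfl⟩
  rw [Nat.mul_mod] at h
  have : r % 5 < 5 := Nat.mod_lt _ (by norm_num)
  interval_cases r % 5 <;> simp at h

lemma sec_two_psi : sec 2 psi = 0 := by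
  ext n
  rw [coeff_sec, coeff_psi, if_neg (not_isSquare_of_mod (by omega)), map_zero]

lemma sec_four_psi : sec 4 psi = 0 := by
  ext n
  rw [coeff_sec, coeff_psi, if_neg (not_isSquare_of_mod (by omega)), map_zero]

lemma sec_three_psi : sec 3 psi = E5 psi := by
  ext n
  rw [coeff_sec, coeff_psi, coeff_expand]
  split_ifs with h1 h2 h2
  · obtain ⟨m, rfl⟩ := h2
    rw [Nat.mul_div_cancel_left _ (by norm_num), coeff_psi, if_pos]
    obtain ⟨r, hr⟩ := h1
    obtain ⟨s, rfl⟩ : 5 ∣ r := by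
      have : 5 ∣ r * r := ⟨5 * (8 * m + 1), by linarith⟩
      exact (Nat.Prime.dvd_mul (by norm_num)).mp this |>.elim id id
    exact ⟨s, by linarith⟩
  · exfalso
    apply h2
    obtain ⟨r, hr⟩ := h1
    obtain ⟨s, rfl⟩ : 5 ∣ r := by
      have : 5 ∣ r * r := ⟨8 * n + 5, by linarith⟩
      exact (Nat.Prime.dvd_mul (by norm_num)).mp this |>.elim id id
    have : 8 * n + 5 = 5 * (s * s) := by linarith
    omega
  · obtain ⟨m, rfl⟩ := h2
    rw [Nat.mul_div_cancel_left _ (by norm_num), coeff_psi, if_neg]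
    rintro ⟨s, hs⟩
    exact h1 ⟨5 * s, by linarith⟩
  · rfl

/-- The term `q ^ 3` comes from the triangular numbers `5 n + 3 = 25 m + 3`, for which
`8 (5 n + 3) + 1` is `25 (8 m + 1)`. -/
lemma psi_dissection :
    psi = E5 (sec 0 psi) + X * E5 (sec 1 psi) + X ^ 3 * E5 (E5 psi) := by
  conv_lhs => rw [dissection psi, sec_two_psi, sec_three_psi, sec_four_psi]
  simp

/-! ### Ramanujan's identity -/

/-- For an odd square `k`, its square root congruent to `1` modulo 4; meaningless for other `k`. -/
def signedRoot (k : ℕ) : ℤ := if k.sqrt % 4 = 1 then k.sqrt else -k.sqrt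

lemma signedRoot_spec {k : ℕ} (hk : IsSquare k) (ho : k % 2 = 1) :
    signedRoot k % 4 = 1 ∧ signedRoot k ^ 2 = k := by
  obtain ⟨r, rfl⟩ := hk
  have hr : r % 2 = 1 := by
    rcases Nat.mod_two_eq_zero_or_one r with h | h
    · simp [Nat.mul_mod, h] at ho
    · exact h
  rw [signedRoot, Nat.sqrt_eq]
  split_ifs with h
  · exact ⟨by omega, by push_cast; ring⟩
  · exact ⟨by omega, by push_cast; ring⟩

lemma signedRoot_eq {k : ℕ} {x : ℤ} (hx : x % 4 = 1) (hk : x ^ 2 = k) : signedRoot k = x := by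
  have hsq : IsSquare k := ⟨x.natAbs, by zify; rw [← hk, ← sq, sq_abs]⟩
  have ho : k % 2 = 1 := by
    obtain ⟨j, hj⟩ : ∃ j, x = 4 * j + 1 := ⟨x / 4, by omega⟩
    have : (k : ℤ) = 2 * (8 * j ^ 2 + 4 * j) + 1 := by rw [← hk, hj]; ring
    omega
  obtain ⟨h1, h2⟩ := signedRoot_spec hsq ho
  rcases sq_eq_sq_iff_eq_or_eq_neg.mp (h2.trans hk.symm) with h | h <;> omega

/-- Products of two series of squares count pairs of integers congruent to `1` modulo 4, since
every odd square has exactly one such root. -/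
lemma coeff_mul_eq_ncard {f g : (ZMod 5)⟦X⟧} (m c d N : ℕ) (hm : m ≠ 0) (hm2 : m % 2 = 0)
    (hc : c % 2 = 1) (hd : d % 2 = 1)
    (hf : ∀ n, coeff n f = if IsSquare (m * n + c) then 1 else 0)
    (hg : ∀ n, coeff n g = if IsSquare (m * n + d) then 1 else 0) :
    let S := {p : ℤ × ℤ | p.1 % 4 = 1 ∧ p.2 % 4 = 1 ∧ ∃ a b : ℕ, a + b = N ∧
      p.1 ^ 2 = m * a + c ∧ p.2 ^ 2 = m * b + d}
    S.Finite ∧ coeff N (f * g) = (S.ncard : ZMod 5) := by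
  classical
  intro S
  let T : Finset (ℕ × ℕ) := (antidiagonal N).filter fun ab =>
    IsSquare (m * ab.1 + c) ∧ IsSquare (m * ab.2 + d)
  let F : ℕ × ℕ → ℤ × ℤ := fun ab => (signedRoot (m * ab.1 + c), signedRoot (m * ab.2 + d))
  have odd_of (n e : ℕ) (he : e % 2 = 1) : (m * n + e) % 2 = 1 := by
    rw [Nat.add_mod, Nat.mul_mod, hm2, he]; simp
  have hF : ∀ ab ∈ T, ((F ab).1 % 4 = 1 ∧ (F ab).1 ^ 2 = m * ab.1 + c) ∧
      (F ab).2 % 4 = 1 ∧ (F ab).2 ^ 2 = m * ab.2 + d := by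
    intro ab hab
    obtain ⟨-, h1, h2⟩ := Finset.mem_filter.mp hab
    exact ⟨by exact_mod_cast signedRoot_spec h1 (odd_of _ _ hc),
      by exact_mod_cast signedRoot_spec h2 (odd_of _ _ hd)⟩
  have hST : S = F '' T := by
    ext ⟨x, y⟩
    constructor
    · rintro ⟨hx, hy, a, b, hab, h1, h2⟩
      refine ⟨(a, b), ?_, ?_⟩
      · refine Finset.mem_filter.mpr ⟨Finset.HasAntidiagonal.mem_antidiagonal.mpr hab, ⟨x.natAbs, ?_⟩,
          ⟨y.natAbs, ?_⟩⟩ <;> zify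
        · rw [← sq, sq_abs, h1]
        · rw [← sq, sq_abs, h2]
      · exact Prod.ext (signedRoot_eq hx (by exact_mod_cast h1))
          (signedRoot_eq hy (by exact_mod_cast h2))
    · rintro ⟨ab, hab, hxy⟩
      have h := hF ab hab
      rw [hxy] at h
      exact ⟨h.1.1, h.2.1, ab.1, ab.2,
        Finset.HasAntidiagonal.mem_antidiagonal.mp (Finset.mem_filter.mp hab).1, h.1.2, h.2.2⟩
  have hinj : Set.InjOn F T := by
    intro ab hab ab' hab' h
    have h1 := hF ab hab
    have h2 := hF ab' hab'
    rw [h] at h1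
    have hm' : (m : ℤ) ≠ 0 := by exact_mod_cast hm
    have e1 : (m : ℤ) * ab.1 = m * ab'.1 := by linarith [h1.1.2, h2.1.2]
    have e2 : (m : ℤ) * ab.2 = m * ab'.2 := by linarith [h1.2.2, h2.2.2]
    exact Prod.ext (by exact_mod_cast mul_left_cancel₀ hm' e1)
      (by exact_mod_cast mul_left_cancel₀ hm' e2)
  refine ⟨hST ▸ T.finite_toSet.image F, ?_⟩
  rw [hST, Set.InjOn.ncard_image hinj, Set.ncard_coe_finset, coeff_mul, Finset.card_filter,
    Nat.cast_sum]
  refine Finset.sum_congr rfl fun ab _ => ?_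
  rw [hf, hg]
  by_cases h1 : IsSquare (m * ab.1 + c) <;> by_cases h2 : IsSquare (m * ab.2 + d) <;> simp [h1, h2]

/-- Representations of `8 N + 2` as a sum of two squares of integers congruent to `1` modulo 4. -/
def twoSq (N : ℕ) : Set (ℤ × ℤ) :=
  {p | p.1 % 4 = 1 ∧ p.2 % 4 = 1 ∧ p.1 ^ 2 + p.2 ^ 2 = 8 * N + 2}

/-- Representations of `40 N + 10` as a sum of two squares of integers congruent to `1` modulo 4,
the first square being `1` and the second `4` modulo 5. -/
def twoSqFive (N : ℕ) : Set (ℤ × ℤ) :=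
  {p | p.1 % 4 = 1 ∧ p.2 % 4 = 1 ∧ p.1 ^ 2 % 5 = 1 ∧ p.2 ^ 2 % 5 = 4 ∧
    p.1 ^ 2 + p.2 ^ 2 = 40 * N + 10}

lemma exists_sq_eq {x : ℤ} (hx : x % 4 = 1) : ∃ a : ℕ, x ^ 2 = 8 * a + 1 := by
  obtain ⟨j, rfl⟩ : ∃ j, x = 4 * j + 1 := ⟨x / 4, by omega⟩
  have h : 0 ≤ 2 * j ^ 2 + j := by
    rcases le_or_gt 0 j with h | h
    · positivity
    · nlinarith
  exact ⟨(2 * j ^ 2 + j).toNat, by rw [Int.toNat_of_nonneg h]; ring⟩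

lemma sq_mod_five (x : ℤ) : (x % 5 = 0 ∧ x ^ 2 % 5 = 0) ∨ (x % 5 = 1 ∧ x ^ 2 % 5 = 1) ∨
    (x % 5 = 2 ∧ x ^ 2 % 5 = 4) ∨ (x % 5 = 3 ∧ x ^ 2 % 5 = 4) ∨ (x % 5 = 4 ∧ x ^ 2 % 5 = 1) := by
  have h : x % 5 = 0 ∨ x % 5 = 1 ∨ x % 5 = 2 ∨ x % 5 = 3 ∨ x % 5 = 4 := by omega
  rcases h with h | h | h | h | h <;> simp [sq, Int.mul_emod, h]

lemma twoSq_eq (N : ℕ) : twoSq N =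
    {p : ℤ × ℤ | p.1 % 4 = 1 ∧ p.2 % 4 = 1 ∧ ∃ a b : ℕ, a + b = N ∧
      p.1 ^ 2 = (8 : ℕ) * a + (1 : ℕ) ∧ p.2 ^ 2 = (8 : ℕ) * b + (1 : ℕ)} := by
  ext ⟨x, y⟩
  constructor
  · rintro ⟨hx, hy, h⟩
    obtain ⟨a, ha⟩ := exists_sq_eq hx
    obtain ⟨b, hb⟩ := exists_sq_eq hy
    dsimp only at ha hb h
    exact ⟨hx, hy, a, b, by omega, by simpa using ha, by simpa using hb⟩
  · rintro ⟨hx, hy, a, b, hab, h1, h2⟩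
    refine ⟨hx, hy, ?_⟩
    push_cast at h1 h2 ⊢
    rw [h1, h2, ← hab]
    push_cast
    ring

lemma twoSqFive_eq (N : ℕ) : twoSqFive N =
    {p : ℤ × ℤ | p.1 % 4 = 1 ∧ p.2 % 4 = 1 ∧ ∃ a b : ℕ, a + b = N ∧
      p.1 ^ 2 = (40 : ℕ) * a + (1 : ℕ) ∧ p.2 ^ 2 = (40 : ℕ) * b + (9 : ℕ)} := by
  ext ⟨x, y⟩
  constructor
  · rintro ⟨hx, hy, h1, h4, h⟩
    obtain ⟨a, ha⟩ := exists_sq_eq hx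
    obtain ⟨b, hb⟩ := exists_sq_eq hy
    dsimp only at ha hb h1 h4 h
    refine ⟨hx, hy, a / 5, b / 5, ?_, ?_, ?_⟩ <;> push_cast <;> omega
  · rintro ⟨hx, hy, a, b, hab, h1, h2⟩
    push_cast at h1 h2
    refine ⟨hx, hy, ?_, ?_, ?_⟩ <;> dsimp only <;> omega

lemma coeff_psi_sq (N : ℕ) :
    (twoSq N).Finite ∧ coeff N (psi ^ 2) = ((twoSq N).ncard : ZMod 5) := by
  rw [twoSq_eq, sq]
  exact coeff_mul_eq_ncard 8 1 1 N (by norm_num) rfl rfl rfl coeff_psi coeff_psi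

lemma coeff_secs (N : ℕ) : (twoSqFive N).Finite ∧
    coeff N (sec 0 psi * sec 1 psi) = ((twoSqFive N).ncard : ZMod 5) := by
  rw [twoSqFive_eq]
  refine coeff_mul_eq_ncard 40 1 9 N (by norm_num) rfl rfl rfl (fun n => ?_) (fun n => ?_)
  · rw [coeff_sec, coeff_psi, show 8 * (5 * n + 0) + 1 = 40 * n + 1 by ring]
  · rw [coeff_sec, coeff_psi, show 8 * (5 * n + 1) + 1 = 40 * n + 9 by ring]

/-- Representations of `40 N + 10` as `u ^ 2 + v ^ 2` with `v ≡ 2 u` modulo 5. -/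
def twoSqTwist (N : ℕ) : Set (ℤ × ℤ) :=
  {p | p.1 % 4 = 1 ∧ p.2 % 4 = 1 ∧ (p.2 - 2 * p.1) % 5 = 0 ∧ p.1 ^ 2 + p.2 ^ 2 = 40 * N + 10}

/-- Multiplication by the Gaussian integer `-(1 + 2 i)`, of norm 5. -/
lemma twoSqTwist_eq_image (N : ℕ) : ∃ F : ℤ × ℤ → ℤ × ℤ,
    Function.Injective F ∧ twoSqTwist N = F '' twoSq N := by
  let F : ℤ × ℤ → ℤ × ℤ := fun p => (2 * p.2 - p.1, -2 * p.1 - p.2)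
  have hF : Function.Injective F := by
    rintro ⟨x, y⟩ ⟨x', y'⟩ h
    simp only [F, Prod.mk.injEq] at h ⊢
    omega
  refine ⟨F, hF, ?_⟩
  ext ⟨u, v⟩
  constructor
  · rintro ⟨hu, hv, huv, h⟩
    dsimp only at hu hv huv h
    obtain ⟨y, hy⟩ : ∃ y, v = 2 * u - 5 * y := ⟨(2 * u - v) / 5, by omega⟩
    subst hy
    refine ⟨(2 * y - u, y), ⟨?_, ?_, ?_⟩, ?_⟩
    · dsimp only; omega
    · dsimp only; omega
    · dsimp only; linarith
    · simp only [F, Prod.mk.injEq]; constructor <;> ring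
  · rintro ⟨⟨x, y⟩, ⟨hx, hy, h⟩, hxy⟩
    simp only [F, Prod.mk.injEq] at hx hy h hxy
    obtain ⟨rfl, rfl⟩ := hxy
    refine ⟨?_, ?_, ?_, ?_⟩ <;> dsimp only
    · omega
    · omega
    · omega
    · linarith

/-- The part of `twoSqTwist N` prime to 5: for a pair `(p, r)` in `twoSqFive N` exactly one of
`r ≡ 2 p` and `p ≡ 2 r` holds modulo 5. -/
lemma ncard_twist_unit (N : ℕ) :
    {p ∈ twoSqTwist N | p.1 % 5 ≠ 0}.ncard = (twoSqFive N).ncard := by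
  let F : ℤ × ℤ → ℤ × ℤ := fun p => if (p.2 - 2 * p.1) % 5 = 0 then p else p.swap
  have hF : Set.InjOn F (twoSqFive N) := by
    rintro ⟨x, y⟩ ⟨-, -, h1, h4, -⟩ ⟨x', y'⟩ ⟨-, -, h1', h4', -⟩ h
    simp only [F] at h h1 h4 h1' h4'
    split_ifs at h <;> simp only [Prod.swap_prod_mk, Prod.mk.injEq] at h ⊢
    · exact h
    · obtain ⟨rfl, rfl⟩ := h; omega
    · obtain ⟨rfl, rfl⟩ := h; omega
    · exact h.symm
  rw [← Set.InjOn.ncard_image hF]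
  congr 1
  ext ⟨u, v⟩
  have hu5 := sq_mod_five u
  have hv5 := sq_mod_five v
  constructor
  · rintro ⟨⟨hu, hv, huv, h⟩, h5⟩
    dsimp only at hu hv huv h h5
    by_cases hc : u ^ 2 % 5 = 1
    · refine ⟨(u, v), ⟨hu, hv, hc, ?_, h⟩, if_pos huv⟩
      dsimp only; omega
    · refine ⟨(v, u), ⟨hv, hu, ?_, ?_, ?_⟩, if_neg ?_⟩ <;> dsimp only <;> omega
  · rintro ⟨⟨x, y⟩, ⟨hx, hy, h1, h4, h⟩, hxy⟩
    have hx5 := sq_mod_five x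
    have hy5 := sq_mod_five y
    simp only [F] at hx hy h1 h4 h hxy
    split_ifs at hxy with hc <;> simp only [Prod.swap_prod_mk, Prod.mk.injEq] at hxy <;>
      obtain ⟨rfl, rfl⟩ := hxy <;> refine ⟨⟨?_, ?_, ?_, ?_⟩, ?_⟩ <;> dsimp only <;> omega

/-- The part of `twoSqTwist N` divisible by 5. -/
lemma ncard_twist_zero (N : ℕ) :
    {p ∈ twoSqTwist N | p.1 % 5 = 0}.ncard =
      if N % 5 = 1 then (twoSq (N / 5)).ncard else 0 := by
  have hsq (u v : ℤ) : (5 * u) ^ 2 + (5 * v) ^ 2 = 25 * (u ^ 2 + v ^ 2) := by ring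
  have hdiv : ∀ u v : ℤ, (u, v) ∈ twoSqTwist N → u % 5 = 0 →
      ∃ x y, u = 5 * x ∧ v = 5 * y ∧ x % 4 = 1 ∧ y % 4 = 1 ∧
        25 * (x ^ 2 + y ^ 2) = 40 * N + 10 := by
    rintro u v ⟨hu, hv, huv, h⟩ h5
    dsimp only at hu hv huv h
    obtain ⟨x, rfl⟩ : ∃ x, u = 5 * x := ⟨u / 5, by omega⟩
    obtain ⟨y, rfl⟩ : ∃ y, v = 5 * y := ⟨v / 5, by omega⟩
    exact ⟨x, y, rfl, rfl, by omega, by omega, by rw [← hsq, h]⟩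
  split_ifs with hN
  · let F : ℤ × ℤ → ℤ × ℤ := fun p => (5 * p.1, 5 * p.2)
    have hF : Function.Injective F := by
      rintro ⟨x, y⟩ ⟨x', y'⟩ h
      simp only [F, Prod.mk.injEq] at h ⊢
      omega
    rw [← Set.ncard_image_of_injective (twoSq (N / 5)) hF]
    congr 1
    ext ⟨u, v⟩
    constructor
    · rintro ⟨hm, h5⟩
      obtain ⟨x, y, rfl, rfl, hx, hy, h⟩ := hdiv u v hm h5
      refine ⟨(x, y), ⟨hx, hy, ?_⟩, rfl⟩
      dsimp only; omega
    · rintro ⟨⟨x, y⟩, ⟨hx, hy, h⟩, hxy⟩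
      simp only [F, Prod.mk.injEq] at hx hy h hxy
      obtain ⟨rfl, rfl⟩ := hxy
      refine ⟨⟨?_, ?_, ?_, ?_⟩, ?_⟩ <;> dsimp only
      · omega
      · omega
      · omega
      · rw [hsq]; omega
      · omega
  · have he : {p ∈ twoSqTwist N | p.1 % 5 = 0} = ∅ := by
      rw [Set.eq_empty_iff_forall_notMem]
      rintro ⟨u, v⟩ ⟨hm, h5⟩
      obtain ⟨x, y, -, -, -, -, h⟩ := hdiv u v hm h5
      omega
    rw [he, Set.ncard_empty]

/-- Ramanujan's identity `ψ(q)² = f(q, q⁴) f(q², q³) + q ψ(q⁵)²`, where the two theta functions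
are the sections of `ψ` at the exponents `5 n` and `5 n + 1`. -/
lemma ramanujan : psi ^ 2 = sec 0 psi * sec 1 psi + X * (E5 psi) ^ 2 := by
  ext N
  have hX : coeff N (X * E5 psi ^ 2) =
      ((if N % 5 = 1 then (twoSq (N / 5)).ncard else 0 : ℕ) : ZMod 5) := by
    have h := coeff_X_pow_mul_E5 (s := 1) (n := N / 5) (r := N % 5) (by norm_num)
      (Nat.mod_lt _ (by norm_num)) (psi ^ 2)
    rw [Nat.div_add_mod, pow_one, map_pow, (coeff_psi_sq (N / 5)).2] at h
    rw [h]
    split_ifs <;> simp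
  obtain ⟨F, hF, himage⟩ := twoSqTwist_eq_image N
  have hfin : (twoSqTwist N).Finite := himage ▸ (coeff_psi_sq N).1.image F
  have hcard : (twoSqTwist N).ncard = (twoSq N).ncard := by
    rw [himage, Set.ncard_image_of_injective _ hF]
  rw [map_add, hX, (coeff_secs N).2, (coeff_psi_sq N).2, ← hcard, ← ncard_twist_zero,
    ← ncard_twist_unit, ← Nat.cast_add]
  congr 1
  rw [← Set.ncard_union_eq _ (hfin.subset (Set.sep_subset _ _)) (hfin.subset (Set.sep_subset _ _))]
  · congr 1
    ext p
    simp only [Set.mem_union, Set.mem_sep_iff]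
    tauto
  · rw [Set.disjoint_left]
    exact fun p h1 h2 => h1.2 h2.2

/-! ### The sections of the reciprocal theta function -/

lemma five_eq_zero : (5 : (ZMod 5)⟦X⟧) = 0 := by
  have : (5 : ZMod 5) = 0 := by decide
  rw [← map_ofNat (C (R := ZMod 5)) 5, this, map_zero]

lemma sec_psi_sq : sec 1 (psi ^ 2) = 2 * sec 0 psi * sec 1 psi + X * E5 psi ^ 2 := by
  set A := sec 0 psi
  set B := sec 1 psi
  set D := E5 psi
  have h := (sec_dissection (A ^ 2) (2 * A * B + X * D ^ 2) (B ^ 2) (2 * A * D) (2 * B * D)).2.1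
  rw [← h]
  congr 1
  rw [psi_dissection]
  simp only [map_add, map_mul, map_pow, expand_X, map_ofNat]
  ring

/-- Three of the sections of `ψ ^ 3` share, by Ramanujan's identity, the factor `ψ ^ 2`. -/
lemma sec_psi_cube :
    sec 1 (psi ^ 3) = 3 * sec 0 psi * psi ^ 2 ∧ sec 2 (psi ^ 3) = 3 * sec 1 psi * psi ^ 2 ∧
      sec 4 (psi ^ 3) = E5 psi * psi ^ 2 := by
  rw [ramanujan]
  set A := sec 0 psi
  set B := sec 1 psi
  set D := E5 psi
  have h := sec_dissection (A ^ 3 + 3 * X * B ^ 2 * D) (3 * A * (A * B + X * D ^ 2))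
    (3 * B * (A * B + X * D ^ 2)) (B ^ 3 + 3 * A ^ 2 * D) (D * (A * B + X * D ^ 2))
  obtain ⟨-, h1, h2, -, h4⟩ := h
  have e : psi ^ 3 = E5 (A ^ 3 + 3 * X * B ^ 2 * D) + X * E5 (3 * A * (A * B + X * D ^ 2)) +
      X ^ 2 * E5 (3 * B * (A * B + X * D ^ 2)) + X ^ 3 * E5 (B ^ 3 + 3 * A ^ 2 * D) +
      X ^ 4 * E5 (D * (A * B + X * D ^ 2)) := by
    rw [psi_dissection]
    simp only [map_add, map_mul, map_pow, expand_X, map_ofNat]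
    linear_combination X ^ 4 * E5 A * E5 B * E5 D * five_eq_zero
  rw [e]
  exact ⟨h1, h2, h4⟩

/-- The square of Ramanujan's identity is what the dissection of `ψ ^ 4` gives at the exponents
`5 n + 2`, up to multiples of 5. -/
lemma sec_psi_four : sec 2 (psi ^ 4) = psi ^ 4 := by
  have hR : (sec 0 psi * sec 1 psi + X * E5 psi ^ 2) ^ 2 = psi ^ 4 := by rw [← ramanujan]; ring
  generalize hA : sec 0 psi = A at hR
  generalize hB : sec 1 psi = B at hR
  generalize hD : E5 psi = D at hR
  have h := (sec_dissection (A ^ 4 + 12 * X * A * B ^ 2 * D + 4 * X ^ 2 * B * D ^ 3)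
    (4 * A ^ 3 * B + 4 * X * B ^ 3 * D + 6 * X * A ^ 2 * D ^ 2) ((A * B + X * D ^ 2) ^ 2)
    (4 * A * B ^ 3 + 4 * A ^ 3 * D + 6 * X * B ^ 2 * D ^ 2)
    (B ^ 4 + 12 * A ^ 2 * B * D + 4 * X * A * D ^ 3)).2.2.1
  refine Eq.trans (congrArg (sec 2) ?_) (h.trans hR)
  have hpsi := psi_dissection
  rw [hA, hB, hD] at hpsi
  rw [hpsi]
  simp only [map_add, map_mul, map_pow, expand_X, map_ofNat]
  linear_combination X ^ 2 * (E5 A ^ 2 * E5 B ^ 2 + 2 * X ^ 5 * E5 A * E5 B * E5 D ^ 2) *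
    five_eq_zero

/-- The sections of exponents `5 n + 2`, then `5 n + 4`, then `5 n + 1` turn `1 / ψ` into a series
whose next two sections vanish. -/
lemma sec_podSeries (s : ℕ) (hs : s = 1 ∨ s = 2) :
    sec s (sec 1 (sec 4 (sec 2 podSeries))) = 0 := by
  have hne : psi ≠ 0 := fun h => by simpa [h] using podSeries_mul_psi
  -- Both sides agree after multiplication by `ψ`, as `(1 / ψ) ψ(q⁵) = ψ ^ 4`.
  have h2 : sec 2 podSeries = psi ^ 3 := by
    have h := (sec_mul_E5 podSeries psi).2.2.1
    rw [← pow_five, show podSeries * psi ^ 5 = podSeries * psi * psi ^ 4 by ring,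
      podSeries_mul_psi, one_mul, sec_psi_four] at h
    exact mul_right_cancel₀ hne (by rw [← h]; ring)
  have h1 : sec 1 (psi ^ 2 * E5 psi) = 2 * psi ^ 3 - X * psi * E5 psi ^ 2 := by
    rw [(sec_mul_E5 (psi ^ 2) psi).2.1, sec_psi_sq]
    linear_combination -2 * psi * ramanujan
  have hX : X * psi * E5 psi ^ 2 = X * psi * E5 (psi ^ 2) := by rw [map_pow]
  have hXpsi : X * psi = E5 0 + X * E5 (sec 0 psi) + X ^ 2 * E5 (sec 1 psi) + X ^ 3 * E5 0 +
      X ^ 4 * E5 (E5 psi) := by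
    conv_lhs => rw [psi_dissection]
    simp only [map_zero]
    ring
  have hd := sec_dissection 0 (sec 0 psi) (sec 1 psi) 0 (E5 psi)
  simp only [← hXpsi] at hd
  have two_mul_eq : (2 : (ZMod 5)⟦X⟧) * psi ^ 3 = psi ^ 3 + psi ^ 3 := two_mul _
  rw [h2, sec_psi_cube.2.2, mul_comm, h1, hX, two_mul_eq, map_sub, map_add]
  rcases hs with rfl | rfl
  · rw [(sec_mul_E5 _ _).2.1, hd.2.1, sec_psi_cube.1]
    linear_combination sec 0 psi * psi ^ 2 * five_eq_zero
  · rw [(sec_mul_E5 _ _).2.2.1, hd.2.2.1, sec_psi_cube.2.1]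
    linear_combination sec 1 psi * psi ^ 2 * five_eq_zero

lemma five_dvd_pod (n s : ℕ) (hs : s = 1 ∨ s = 2) : (5 : ℤ) ∣ pod (625 * n + 125 * s + 47) := by
  have h := congrArg (coeff n) (sec_podSeries s hs)
  simp only [coeff_sec, map_zero, podSeries, coeff_mk] at h
  rw [show 5 * (5 * (5 * (5 * n + s) + 1) + 4) + 2 = 625 * n + 125 * s + 47 by ring] at h
  have h' := (mul_eq_zero.mp h).resolve_left (pow_ne_zero _ (by decide))
  exact_mod_cast (ZMod.natCast_eq_zero_iff _ 5).mp h'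

/-! ### Reduction to `pod` by Lucas's theorem -/

/-- By Lucas's theorem, since the last two base 5 digits of `2 * (25 * J + 12)` are both `4`. -/
lemma five_dvd_choose (J n : ℕ) (h : n % 25 ≠ 12) :
    (5 : ℤ) ∣ ((n + (25 * J + 12)).choose (2 * (25 * J + 12)) : ℤ) := by
  have h1 := Choose.choose_modEq_choose_mul_prod_range_choose (p := 5)
    (n := n + (25 * J + 12)) (k := 2 * (25 * J + 12)) 2
  rw [Finset.prod_range_succ, Finset.prod_range_one] at h1
  have e0 : 2 * (25 * J + 12) / 5 ^ 0 % 5 = 4 := by omega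
  have e1 : 2 * (25 * J + 12) / 5 ^ 1 % 5 = 4 := by omega
  rw [e0, e1] at h1
  refine (Int.ModEq.dvd_iff h1).mpr ?_
  have : (n + (25 * J + 12)) / 5 ^ 0 % 5 < 4 ∨ (n + (25 * J + 12)) / 5 ^ 1 % 5 < 4 := by omega
  rcases this with h | h <;> rw [Nat.choose_eq_zero_of_lt h] <;> simp only [zero_mul, mul_zero,
    Nat.cast_zero, dvd_zero]

lemma five_dvd_MO2 (J N s : ℕ) (hs : s = 1 ∨ s = 2) :
    (5 : ℤ) ∣ MO2 (25 * J + 12) (625 * N + 125 * s + 125) := by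
  refine Finset.dvd_sum fun ⟨k, n⟩ hkn => ?_
  have hk : k + n * (n + 1) / 2 = 625 * N + 125 * s + 125 := (Finset.mem_filter.mp hkn).2
  by_cases hn : n % 25 = 12
  · obtain ⟨m, rfl⟩ : ∃ m, n = 25 * m + 12 := ⟨n / 25, by omega⟩
    have hT : (25 * m + 12) * (25 * m + 12 + 1) / 2 = 625 * (m * (m + 1) / 2) + 78 := by
      have h : m * (m + 1) / 2 * 2 = m * (m + 1) :=
        Nat.div_mul_cancel (Nat.even_mul_succ_self m).two_dvd
      refine Nat.div_eq_of_eq_mul_left (by norm_num) ?_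
      generalize m * (m + 1) / 2 = T at h
      linarith
    obtain ⟨n', rfl⟩ : ∃ n', k = 625 * n' + 125 * s + 47 :=
      ⟨N - m * (m + 1) / 2, by omega⟩
    exact ((five_dvd_pod n' s hs).mul_left _).mul_right _
  · exact (five_dvd_choose J n hn).mul_left _

theorem stmt13 (J N : ℕ) :
    (5 : ℤ) ∣ MO2 (25 * J + 12) (625 * N + 250) ∧
      (5 : ℤ) ∣ MO2 (25 * J + 12) (625 * N + 375) :=
  ⟨five_dvd_MO2 J N 1 (Or.inl rfl), five_dvd_MO2 J N 2 (Or.inr rfl)⟩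
end
end

section
/- For all integers J ≥ 0 and N ≥ 0, MO(−2, 11J+4; 11N+6) ≡ 0 (mod 11). -/
/-!
Write `t = 11 J + 4`. By Lucas, `C(n+t, 2t)` and `C(n+t, 2t+1)` share the factor
`C(⌊(n+t)/11⌋, 2J)` modulo 11, so `cm2(n, t)` is a multiple of `C(r, 8) + 2 C(r, 9)`, where
`r = (n + t) mod 11`. This vanishes modulo 11 unless `r` is 8 or 10, i.e. `n ≡ 4, 6 (mod 11)`, and
then `n(n+1)/2 ≡ 10`, so that `k ≡ 7 (mod 11)` whenever `k + n(n+1)/2 = 11 N + 6`. The theorem thus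
follows from `p₋₃(11 m + 7) ≡ 0 (mod 11)` (`p3_vanish`).

For this congruence let `D = q d/dq`, `P = ∑ p(n) qⁿ` and `S = ∑ σ₁(n) qⁿ` over `ZMod 11`. Then
`D P = S P` (`part_ode`), hence `D(P³) = 3 S P³`. The series
`A = 3 + ∑ (10 σ₇(n) + 8 n σ₅(n)) qⁿ`, which is `3 E₈ + 4 D E₆` modulo 11, satisfies
`D A + 3 S A + 4 A = 1` (`aux_ode`). Together these give `(D + 4)(P³ A) = P³`. On coefficients,
`p₋₃(k) = (k + 4) [q^k](P³ A)`, and the factor `k + 4` is zero for `k ≡ 7`.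

Conceptually, `P³` is `η⁸` up to a power of `q` and a factor that is a series in `q¹¹`, and the
equation for `A` is a consequence of Ramanujan's differential equations and `E₁₀ ≡ 1 (mod 11)`.
Here it is proved directly: comparing coefficients turns it into an evaluation of `∑ a (4 b⁷ + b⁶ y)` over positive solutions
of `a x + b y = n` (`conv_identity`). The evaluation uses the bijection
`(a, b, x, y) ↦ (a - b, b, x, x + y)` from solutions with `a > b` to solutions with `y > x`.
Applied to a suitable polynomial `F`, it expresses the sum through solutions with `x = y` and
solutions with `a = b` (`quads_sum_H`), and these are divisor sums.
-/

open Finset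

noncomputable section

/-! ### Sums over the solutions of `a x + b y = n` -/

/-- The quadruples `(a, b, x, y)` of positive integers with `a x + b y = n`. The bound `Icc 1 n` on
each entry is automatic for solutions (see `mem_quads`). -/
def quads (n : ℕ) : Finset (ℕ × ℕ × ℕ × ℕ) :=
  (Icc 1 n ×ˢ Icc 1 n ×ˢ Icc 1 n ×ˢ Icc 1 n).filter
    fun v => v.1 * v.2.2.1 + v.2.1 * v.2.2.2 = n

lemma mem_quads {n a b x y : ℕ} :
    (a, b, x, y) ∈ quads n ↔ 0 < a ∧ 0 < b ∧ 0 < x ∧ 0 < y ∧ a * x + b * y = n := by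
  simp only [quads, mem_filter, mem_product, mem_Icc]
  constructor
  · rintro ⟨⟨⟨h1, -⟩, ⟨h2, -⟩, ⟨h3, -⟩, h4, -⟩, h⟩
    exact ⟨h1, h2, h3, h4, h⟩
  · rintro ⟨h1, h2, h3, h4, h⟩
    refine ⟨⟨⟨h1, ?_⟩, ⟨h2, ?_⟩, ⟨h3, ?_⟩, h4, ?_⟩, h⟩ <;> nlinarith

/-- A polynomial, invariant under `(a, b, x, y) ↦ (b, a, y, x)`, whose shear `M` is again invariant
under this swap. Its coefficients solve the linear system over `ZMod 11` given by these two
conditions and `2 (F - M) = H(a, b, y) + H(b, a, x)`. -/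
def F (a b x y : ZMod 11) : ZMod 11 :=
  3 * (a ^ 8 + b ^ 8) + (a * b ^ 7 + a ^ 7 * b) + 3 * (a ^ 2 * b ^ 6 + a ^ 6 * b ^ 2)
    + 4 * a ^ 4 * b ^ 4 + 3 * (a ^ 5 * b ^ 2 * x + a ^ 2 * b ^ 5 * y)
    + 3 * (a ^ 6 * b * x + a * b ^ 6 * y) + 4 * (a ^ 7 * x + b ^ 7 * y)

/-- The shear of `F`: its value at `(a, b, x, y)` is that of `F` at `(a - b, b, x, x + y)`. -/
def M (a b x y : ZMod 11) : ZMod 11 := F (a - b) b x (x + y)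

lemma F_swap (a b x y : ZMod 11) : F b a y x = F a b x y := by
  unfold F; ring

/-- The polynomial whose sum over `quads n` is to be evaluated. -/
def H (a b y : ZMod 11) : ZMod 11 := a * (4 * b ^ 7 + b ^ 6 * y)

lemma M_eq (a b x y : ZMod 11) :
    M a b x y = F a b x y - (2 * (a * b ^ 7 + a ^ 7 * b) + 6 * (a ^ 6 * b * x + a * b ^ 6 * y)) := by
  rw [← sub_eq_zero]
  unfold M F
  ring_nf
  reduce_mod_char

lemma split_sum (n : ℕ) (p q : ℕ × ℕ × ℕ × ℕ → ℕ) (g : ℕ × ℕ × ℕ × ℕ → ZMod 11) :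
    ∑ v ∈ quads n, g v = ∑ v ∈ quads n with p v < q v, g v + ∑ v ∈ quads n with q v < p v, g v
      + ∑ v ∈ quads n with p v = q v, g v := by
  rw [sum_filter, sum_filter, sum_filter, ← sum_add_distrib, ← sum_add_distrib]
  refine sum_congr rfl fun v _ => ?_
  rcases lt_trichotomy (p v) (q v) with h | h | h
  · simp [h, h.ne, h.not_gt]
  · simp [h]
  · simp [h, h.ne', h.not_gt]

/-- The swap `(a, b, x, y) ↦ (b, a, y, x)` exchanges the regions `p < q` and `q < p` when it
exchanges `p` and `q`. -/
lemma swap_sum (n : ℕ) (p q : ℕ × ℕ × ℕ × ℕ → ℕ) (g : ℕ × ℕ × ℕ × ℕ → ZMod 11)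
    (hg : ∀ a b x y, g (b, a, y, x) = g (a, b, x, y))
    (hp : ∀ a b x y, p (b, a, y, x) = q (a, b, x, y)) :
    ∑ v ∈ quads n with p v < q v, g v = ∑ v ∈ quads n with q v < p v, g v := by
  refine sum_nbij' (fun v => (v.2.1, v.1, v.2.2.2, v.2.2.1)) (fun v => (v.2.1, v.1, v.2.2.2, v.2.2.1))
    ?_ ?_ ?_ ?_ ?_
  · rintro ⟨a, b, x, y⟩ h
    simp only [mem_filter, mem_quads, hp] at h ⊢
    refine ⟨⟨h.1.2.1, h.1.1, h.1.2.2.2.1, h.1.2.2.1, ?_⟩, h.2⟩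
    linarith [h.1.2.2.2.2]
  · rintro ⟨a, b, x, y⟩ h
    simp only [mem_filter, mem_quads, hp] at h ⊢
    refine ⟨⟨h.1.2.1, h.1.1, h.1.2.2.2.1, h.1.2.2.1, ?_⟩, h.2⟩
    linarith [h.1.2.2.2.2]
  · rintro ⟨a, b, x, y⟩ h; rfl
  · rintro ⟨a, b, x, y⟩ h; rfl
  · rintro ⟨a, b, x, y⟩ h
    exact (hg a b x y).symm

/-- The change of variables `(a, b, x, y) ↦ (a - b, b, x, x + y)` preserves `a x + b y` and maps the
solutions with `a > b` onto those with `y > x`. -/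
lemma shear_sum (n : ℕ) :
    ∑ v ∈ quads n with v.2.1 < v.1, M v.1 v.2.1 v.2.2.1 v.2.2.2
      = ∑ v ∈ quads n with v.2.2.1 < v.2.2.2, F v.1 v.2.1 v.2.2.1 v.2.2.2 := by
  refine sum_nbij' (fun v => (v.1 - v.2.1, v.2.1, v.2.2.1, v.2.2.1 + v.2.2.2))
    (fun v => (v.1 + v.2.1, v.2.1, v.2.2.1, v.2.2.2 - v.2.2.1)) ?_ ?_ ?_ ?_ ?_
  · rintro ⟨a, b, x, y⟩ h
    simp only [mem_filter, mem_quads] at h ⊢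
    obtain ⟨⟨h1, h2, h3, h4, h5⟩, h6⟩ := h
    obtain ⟨c, rfl⟩ := Nat.exists_eq_add_of_lt h6
    have : b + c + 1 - b = c + 1 := by omega
    rw [this]
    refine ⟨⟨by omega, h2, h3, by omega, ?_⟩, by omega⟩
    rw [← h5]; ring
  · rintro ⟨a, b, x, y⟩ h
    simp only [mem_filter, mem_quads] at h ⊢
    obtain ⟨⟨h1, h2, h3, h4, h5⟩, h6⟩ := h
    obtain ⟨c, rfl⟩ := Nat.exists_eq_add_of_lt h6
    have : x + c + 1 - x = c + 1 := by omega
    rw [this]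
    refine ⟨⟨by omega, h2, h3, by omega, ?_⟩, by omega⟩
    rw [← h5]; ring
  · rintro ⟨a, b, x, y⟩ h
    simp only [mem_filter, mem_quads] at h
    simp only [Prod.mk.injEq, true_and]
    omega
  · rintro ⟨a, b, x, y⟩ h
    simp only [mem_filter, mem_quads] at h
    simp only [Prod.mk.injEq, true_and]
    omega
  · rintro ⟨a, b, x, y⟩ h
    simp only [mem_filter] at h
    simp only [M]
    rw [Nat.cast_sub h.2.le, Nat.cast_add]

lemma M_swap (a b x y : ZMod 11) : M b a y x = M a b x y := by
  rw [M_eq, M_eq, F_swap]; ring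

/-- Splitting the sum of `F` by comparing `x` with `y` and the sum of `M` by comparing `a` with `b`,
all off-diagonal parts agree by `swap_sum` and `shear_sum`, so `∑ F - ∑ M` is a difference of
diagonal sums. After symmetrization `F - M` is `H`. -/
lemma quads_sum_H (n : ℕ) :
    ∑ v ∈ quads n, H v.1 v.2.1 v.2.2.2
      = ∑ v ∈ quads n with v.2.2.1 = v.2.2.2, F v.1 v.2.1 v.2.2.1 v.2.2.2
        - ∑ v ∈ quads n with v.2.1 = v.1, M v.1 v.2.1 v.2.2.1 v.2.2.2 := by
  have hF := split_sum n (fun v => v.2.2.1) (fun v => v.2.2.2)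
    (fun v => F v.1 v.2.1 v.2.2.1 v.2.2.2)
  have hM := split_sum n (fun v => v.2.1) (fun v => v.1)
    (fun v => M v.1 v.2.1 v.2.2.1 v.2.2.2)
  rw [← swap_sum n (fun v => v.2.2.1) (fun v => v.2.2.2) _ (fun a b x y => F_swap ..)
    (fun a b x y => rfl), ← shear_sum] at hF
  rw [← swap_sum n (fun v => v.2.1) (fun v => v.1) _ (fun a b x y => M_swap ..)
    (fun a b x y => rfl)] at hM
  have hH : ∑ v ∈ quads n, (H v.1 v.2.1 v.2.2.2 : ZMod 11)
      = ∑ v ∈ quads n, (H v.2.1 v.1 v.2.2.1 : ZMod 11) := by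
    refine sum_nbij' (fun v => (v.2.1, v.1, v.2.2.2, v.2.2.1))
      (fun v => (v.2.1, v.1, v.2.2.2, v.2.2.1)) ?_ ?_ (fun _ _ => rfl) (fun _ _ => rfl)
      (fun _ _ => rfl) <;>
    · rintro ⟨a, b, x, y⟩ h
      simp only [mem_quads] at h ⊢
      exact ⟨h.2.1, h.1, h.2.2.2.1, h.2.2.1, by linarith [h.2.2.2.2]⟩
  have hFM : 2 * (∑ v ∈ quads n, F v.1 v.2.1 v.2.2.1 v.2.2.2
      - ∑ v ∈ quads n, M v.1 v.2.1 v.2.2.1 v.2.2.2)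
      = ∑ v ∈ quads n, (H v.1 v.2.1 v.2.2.2 : ZMod 11)
        + ∑ v ∈ quads n, (H v.2.1 v.1 v.2.2.1 : ZMod 11) := by
    rw [← sum_sub_distrib, mul_sum, ← sum_add_distrib]
    refine sum_congr rfl fun v _ => ?_
    rw [M_eq, ← sub_eq_zero]
    unfold H
    ring_nf
    reduce_mod_char
  rw [← hH] at hFM
  have h2 : (2 : ZMod 11) ≠ 0 := by decide
  have : Fact (Nat.Prime 11) := ⟨by norm_num⟩
  refine mul_left_cancel₀ h2 ?_
  linear_combination (-1 : ZMod 11) * hFM + 2 * hF - 2 * hM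

/-! ### The diagonal sums -/

/-- The factors on the right are `F(a, c - a, x, x)` expanded in powers of `a`, each `a ^ k` being
replaced by its power sum over `a < d`. -/
lemma sum_F_range (d : ℕ) (c x : ZMod 11) :
    ∑ a ∈ range d, F (a : ZMod 11) (c - a) x x
      = (4 * c ^ 7 * x + 3 * c ^ 8) * d
        + (8 * c ^ 6 * x + 10 * c ^ 7) * (5 * d + 6 * d ^ 2)
        + (3 * c ^ 5 * x + 3 * c ^ 6) * (2 * d + 5 * d ^ 2 + 4 * d ^ 3)
        + 4 * c ^ 4 * (4 * d + 4 * d ^ 3 + 5 * d ^ 4 + 9 * d ^ 5)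
        + 3 * c ^ 2 * (5 * d + 9 * d ^ 3 + 6 * d ^ 5 + 5 * d ^ 6 + 8 * d ^ 7)
        + 10 * c * (d ^ 2 + 2 * d ^ 4 + 7 * d ^ 6 + 5 * d ^ 7 + 7 * d ^ 8)
        + 3 * (4 * d + 10 * d ^ 3 + d ^ 5 + 8 * d ^ 7 + 5 * d ^ 8 + 5 * d ^ 9) := by
  induction d with
  | zero => simp
  | succ d ih =>
    rw [sum_range_succ, ih, ← sub_eq_zero]
    push_cast
    unfold F
    ring_nf
    reduce_mod_char

lemma sum_F_line (d : ℕ) (x : ZMod 11) (hd : 0 < d) :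
    ∑ a ∈ Ico 1 d, F (a : ZMod 11) ((d - a : ℕ) : ZMod 11) x x
      = d + 2 * d ^ 7 + 6 * x * d ^ 6 + 9 * x * d ^ 8 - 3 * d ^ 8 - 4 * x * d ^ 7 := by
  have h := sum_F_range d d x
  rw [range_eq_Ico, sum_eq_sum_Ico_succ_bot hd, zero_add] at h
  have h' : ∑ a ∈ Ico 1 d, F (a : ZMod 11) ((d - a : ℕ) : ZMod 11) x x
      = ∑ a ∈ Ico 1 d, F (a : ZMod 11) (d - a) x x := by
    refine sum_congr rfl fun a ha => ?_
    rw [Nat.cast_sub (mem_Ico.1 ha).2.le]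
  rw [h', eq_sub_of_add_eq' h, ← sub_eq_zero]
  unfold F
  push_cast
  ring_nf
  reduce_mod_char

/-- Solutions with `x = y` have `(a + b) x = n`: the divisor `w.1` is `a + b`, and `w.2` is `x`. -/
lemma sum_F_diag (n : ℕ) :
    ∑ v ∈ quads n with v.2.2.1 = v.2.2.2, F v.1 v.2.1 v.2.2.1 v.2.2.2
      = ∑ w ∈ n.divisorsAntidiagonal, ((w.1 : ZMod 11) + 2 * w.1 ^ 7 + 6 * w.2 * w.1 ^ 6
          + 9 * w.2 * w.1 ^ 8 - 3 * w.1 ^ 8 - 4 * w.2 * w.1 ^ 7) := by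
  have : ∀ w ∈ n.divisorsAntidiagonal, ((w.1 : ZMod 11) + 2 * w.1 ^ 7 + 6 * w.2 * w.1 ^ 6
          + 9 * w.2 * w.1 ^ 8 - 3 * w.1 ^ 8 - 4 * w.2 * w.1 ^ 7)
      = ∑ a ∈ Ico 1 w.1, F (a : ZMod 11) ((w.1 - a : ℕ) : ZMod 11) w.2 w.2 := by
    intro w hw
    rw [sum_F_line]
    exact Nat.pos_of_ne_zero (Nat.ne_zero_of_mem_divisorsAntidiagonal hw).1
  rw [sum_congr rfl this, sum_sigma']
  refine sum_nbij' (fun v => ⟨(v.1 + v.2.1, v.2.2.1), v.1⟩)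
    (fun w => (w.2, w.1.1 - w.2, w.1.2, w.1.2)) ?_ ?_ ?_ ?_ ?_
  · rintro ⟨a, b, x, y⟩ h
    simp only [mem_filter, mem_quads] at h
    obtain ⟨⟨h1, h2, h3, h4, h5⟩, rfl⟩ := h
    simp only [mem_sigma, Nat.mem_divisorsAntidiagonal, mem_Ico]
    refine ⟨⟨by rw [← h5]; ring, ?_⟩, h1, by omega⟩
    rw [← h5]; positivity
  · rintro ⟨⟨d, x⟩, a⟩ h
    simp only [mem_sigma, Nat.mem_divisorsAntidiagonal, mem_Ico] at h
    obtain ⟨⟨rfl, h0⟩, h1, h2⟩ := h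
    simp only [mem_filter, mem_quads, and_true]
    have hx : 0 < x := Nat.pos_of_ne_zero (right_ne_zero_of_mul h0)
    refine ⟨h1, by omega, hx, hx, ?_⟩
    rw [← add_mul]; congr 1; omega
  · rintro ⟨a, b, x, y⟩ h
    simp only [mem_filter, mem_quads] at h
    obtain ⟨-, rfl⟩ := h
    simp
  · rintro ⟨⟨d, x⟩, a⟩ h
    simp only [mem_sigma, Nat.mem_divisorsAntidiagonal, mem_Ico] at h
    have : a + (d - a) = d := by omega
    simp [this]
  · rintro ⟨a, b, x, y⟩ h
    simp only [mem_filter, mem_quads] at h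
    obtain ⟨-, rfl⟩ := h
    simp

/-- Solutions with `a = b` have `a (x + y) = n`: the divisor `w.1` is `a`, and each of the
`w.2 - 1` ways to split `w.2 = x + y` contributes the same amount. -/
lemma sum_M_diag (n : ℕ) :
    ∑ v ∈ quads n with v.2.1 = v.1, M v.1 v.2.1 v.2.2.1 v.2.2.2
      = ∑ w ∈ n.divisorsAntidiagonal,
          ((w.2 : ZMod 11) - 1) * (3 * w.1 ^ 8 + 4 * w.1 ^ 7 * w.2) := by
  have : ∀ w ∈ n.divisorsAntidiagonal,
      ((w.2 : ZMod 11) - 1) * (3 * w.1 ^ 8 + 4 * w.1 ^ 7 * w.2)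
        = ∑ x ∈ Ico 1 w.2, (3 * (w.1 : ZMod 11) ^ 8 + 4 * w.1 ^ 7 * w.2) := by
    intro w hw
    have h := (Nat.ne_zero_of_mem_divisorsAntidiagonal hw).2
    rw [sum_const, Nat.card_Ico, nsmul_eq_mul, Nat.cast_sub (by omega), Nat.cast_one]
  rw [sum_congr rfl this, sum_sigma']
  refine sum_nbij' (fun v => ⟨(v.1, v.2.2.1 + v.2.2.2), v.2.2.1⟩)
    (fun w => (w.1.1, w.1.1, w.2, w.1.2 - w.2)) ?_ ?_ ?_ ?_ ?_
  · rintro ⟨a, b, x, y⟩ h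
    simp only [mem_filter, mem_quads] at h
    obtain ⟨⟨h1, h2, h3, h4, h5⟩, rfl⟩ := h
    simp only [mem_sigma, Nat.mem_divisorsAntidiagonal, mem_Ico]
    refine ⟨⟨by rw [← h5]; ring, ?_⟩, h3, by omega⟩
    rw [← h5]; positivity
  · rintro ⟨⟨d, e⟩, x⟩ h
    simp only [mem_sigma, Nat.mem_divisorsAntidiagonal, mem_Ico] at h
    obtain ⟨⟨rfl, h0⟩, h1, h2⟩ := h
    simp only [mem_filter, mem_quads, and_true]
    have hd : 0 < d := Nat.pos_of_ne_zero (left_ne_zero_of_mul h0)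
    refine ⟨hd, hd, h1, by omega, ?_⟩
    rw [← mul_add]; congr 1; omega
  · rintro ⟨a, b, x, y⟩ h
    simp only [mem_filter, mem_quads] at h
    obtain ⟨-, rfl⟩ := h
    simp
  · rintro ⟨⟨d, e⟩, x⟩ h
    simp only [mem_sigma, Nat.mem_divisorsAntidiagonal, mem_Ico] at h
    have : x + (e - x) = e := by omega
    simp [this]
  · rintro ⟨a, b, x, y⟩ h
    simp only [mem_filter, mem_quads] at h
    obtain ⟨-, rfl⟩ := h
    simp only [M, F]
    push_cast
    ring

/-- A convolution of two divisor sums is a sum over `quads n`. There is no contribution from zero, as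
`Nat.divisorsAntidiagonal 0` is empty. -/
lemma conv_eq (n : ℕ) (f g : ℕ × ℕ → ZMod 11) :
    ∑ ij ∈ antidiagonal n, (∑ u ∈ ij.1.divisorsAntidiagonal, f u)
        * (∑ v ∈ ij.2.divisorsAntidiagonal, g v)
      = ∑ v ∈ quads n, f (v.1, v.2.2.1) * g (v.2.1, v.2.2.2) := by
  simp only [sum_mul_sum, ← sum_product', sum_sigma']
  refine sum_nbij' (fun w => (w.2.1.1, w.2.2.1, w.2.1.2, w.2.2.2))
    (fun v => ⟨(v.1 * v.2.2.1, v.2.1 * v.2.2.2), (v.1, v.2.2.1), (v.2.1, v.2.2.2)⟩) ?_ ?_ ?_ ?_ ?_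
  · rintro ⟨⟨i, j⟩, ⟨a, x⟩, b, y⟩ h
    simp only [mem_sigma, mem_product, HasAntidiagonal.mem_antidiagonal,
      Nat.mem_divisorsAntidiagonal] at h
    obtain ⟨h, ⟨rfl, h1⟩, rfl, h2⟩ := h
    rw [mem_quads]
    simp only [mul_ne_zero_iff, ← Nat.pos_iff_ne_zero] at h1 h2
    exact ⟨h1.1, h2.1, h1.2, h2.2, h⟩
  · rintro ⟨a, b, x, y⟩ h
    rw [mem_quads] at h
    simp only [mem_sigma, mem_product, HasAntidiagonal.mem_antidiagonal, Nat.mem_divisorsAntidiagonal]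
    obtain ⟨h1, h2, h3, h4, h⟩ := h
    exact ⟨h, ⟨trivial, by positivity⟩, trivial, by positivity⟩
  · rintro ⟨⟨i, j⟩, ⟨a, x⟩, b, y⟩ h
    simp only [mem_sigma, mem_product, HasAntidiagonal.mem_antidiagonal,
      Nat.mem_divisorsAntidiagonal] at h
    obtain ⟨h, ⟨rfl, h1⟩, rfl, h2⟩ := h
    rfl
  · rintro ⟨a, b, x, y⟩ h; rfl
  · rintro ⟨⟨i, j⟩, ⟨a, x⟩, b, y⟩ h; rfl

/-- The convolution of `σ₁(n)` with `4 σ₇(n) + n σ₅(n)` modulo 11. With `w.1 * w.2 = n`, the right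
side is `σ₁ + 2 σ₇ + 6 n σ₅ + 6 n σ₇ - 4 n² σ₅`. -/
lemma conv_identity (n : ℕ) :
    ∑ ij ∈ antidiagonal n, (∑ u ∈ ij.1.divisorsAntidiagonal, (u.1 : ZMod 11))
        * (∑ v ∈ ij.2.divisorsAntidiagonal, (4 * (v.1 : ZMod 11) ^ 7 + v.1 ^ 6 * v.2))
      = ∑ w ∈ n.divisorsAntidiagonal, ((w.1 : ZMod 11) + 2 * w.1 ^ 7 + 6 * w.2 * w.1 ^ 6
          + 6 * w.2 * w.1 ^ 8 - 4 * w.1 ^ 7 * w.2 ^ 2) := by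
  rw [conv_eq n (fun u => (u.1 : ZMod 11)) (fun v => 4 * (v.1 : ZMod 11) ^ 7 + v.1 ^ 6 * v.2)]
  have h := quads_sum_H n
  rw [sum_F_diag, sum_M_diag, ← sum_sub_distrib] at h
  unfold H at h
  rw [h]
  refine sum_congr rfl fun w _ => ?_
  ring

/-! ### A differential equation for divisor sums -/

open PowerSeries

/-- The series `∑ σ₁(n) qⁿ` over `ZMod 11`. -/
def sigmaSeries : PowerSeries (ZMod 11) :=
  PowerSeries.mk fun n => ∑ w ∈ n.divisorsAntidiagonal, (w.1 : ZMod 11)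

/-- The series `3 + 8 ∑ (4 σ₇(n) + n σ₅(n)) qⁿ` over `ZMod 11`, which is the reduction of
`3 E₈ + 4 q dE₆/dq`; for `w.1 * w.2 = n` one has `w.1 ^ 6 * w.2 = n * w.1 ^ 5`. -/
def auxSeries : PowerSeries (ZMod 11) :=
  PowerSeries.C 3 + PowerSeries.C 8 * PowerSeries.mk fun n =>
    ∑ w ∈ n.divisorsAntidiagonal, (4 * (w.1 : ZMod 11) ^ 7 + w.1 ^ 6 * w.2)

lemma coeff_X_mul_derivative (f : PowerSeries (ZMod 11)) (n : ℕ) :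
    coeff n (X * d⁄dX (ZMod 11) f) = n * coeff n f := by
  cases n with
  | zero => simp
  | succ n => rw [coeff_succ_X_mul, coeff_derivative]; push_cast; ring

lemma aux_ode : X * d⁄dX (ZMod 11) auxSeries + 3 * sigmaSeries * auxSeries + 4 * auxSeries = 1 := by
  set B : PowerSeries (ZMod 11) := PowerSeries.mk fun n =>
    ∑ w ∈ n.divisorsAntidiagonal, (4 * (w.1 : ZMod 11) ^ 7 + w.1 ^ 6 * w.2) with hB
  have hA : auxSeries = PowerSeries.C 3 + PowerSeries.C 8 * B := rfl
  -- the part of the equation beyond the constant term `4 * 3 = 12 = 1`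
  have hconst : PowerSeries.C (9 : ZMod 11) * sigmaSeries + PowerSeries.C 24 * (sigmaSeries * B)
      + PowerSeries.C 32 * B + PowerSeries.C 8 * (X * d⁄dX (ZMod 11) B) = 0 := by
    ext n
    simp only [map_add, coeff_C_mul, coeff_X_mul_derivative]
    rw [coeff_mul]
    simp only [hB, sigmaSeries, coeff_mk, map_zero]
    rw [conv_identity, mul_sum, mul_sum, mul_sum, mul_sum, mul_sum, ← sum_add_distrib,
      ← sum_add_distrib, ← sum_add_distrib]
    refine sum_eq_zero fun w hw => ?_
    rw [← (Nat.mem_divisorsAntidiagonal.1 hw).1]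
    push_cast
    ring_nf
    reduce_mod_char
  have h12 : PowerSeries.C (12 : ZMod 11) = 1 := by
    rw [show (12 : ZMod 11) = 1 by decide, map_one]
  rw [hA, map_add, derivative_C, Derivation.leibniz, derivative_C]
  simp only [smul_eq_mul, mul_zero, add_zero, zero_add]
  have e (k : ℕ) : PowerSeries.C (k : ZMod 11) = (k : PowerSeries (ZMod 11)) := map_natCast _ k
  have e3 := e 3
  have e8 := e 8
  have e9 := e 9
  have e24 := e 24
  have e32 := e 32
  have e12 := e 12
  push_cast at e3 e8 e9 e24 e32 e12
  rw [e9, e24, e32, e8] at hconst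
  rw [e12] at h12
  rw [e3, e8]
  linear_combination hconst + h12

/-! ### Partitions -/

/-- The generating series `∑ p(n) qⁿ` of the partition numbers over `ZMod 11`. -/
def partSeries : PowerSeries (ZMod 11) := PowerSeries.mk fun n => (numPartitions n : ZMod 11)

/-- Removing `m` copies of `j` is a bijection from the partitions of `n` in which `j` occurs at least
`m` times to the partitions of `n - j * m`. -/
lemma card_count_ge (n j m : ℕ) (hj : 0 < j) :
    #{l : Nat.Partition n | m ≤ l.parts.count j}
      = if j * m ≤ n then numPartitions (n - j * m) else 0 := by
  split_ifs with h
  · rw [numPartitions, Nat.card_eq_fintype_card, ← card_univ]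
    refine card_bij' (fun l hl => ⟨l.parts - Multiset.replicate m j, ?_, ?_⟩)
      (fun l _ => ⟨l.parts + Multiset.replicate m j, ?_, ?_⟩) ?_ ?_ ?_ ?_
    · intro i hi
      exact l.parts_pos (Multiset.mem_of_le (Multiset.sub_le_self _ _) hi)
    · have h1 : Multiset.replicate m j ≤ l.parts :=
        Multiset.le_count_iff_replicate_le.1 (mem_filter.1 hl).2
      have h2 := congrArg Multiset.sum (Multiset.sub_add_cancel h1)
      rw [Multiset.sum_add, l.parts_sum, Multiset.sum_replicate, smul_eq_mul, mul_comm] at h2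
      omega
    · intro i hi
      rcases Multiset.mem_add.1 hi with hi | hi
      · exact l.parts_pos hi
      · rwa [Multiset.eq_of_mem_replicate hi]
    · rw [Multiset.sum_add, l.parts_sum, Multiset.sum_replicate, smul_eq_mul, mul_comm m]
      omega
    · simp
    · simp
    · intro l hl
      have h1 : Multiset.replicate m j ≤ l.parts :=
        Multiset.le_count_iff_replicate_le.1 (mem_filter.1 hl).2
      exact Nat.Partition.ext (Multiset.sub_add_cancel h1)
    · intro l hl
      exact Nat.Partition.ext (Multiset.add_sub_cancel_right)
  · rw [card_eq_zero, filter_eq_empty_iff]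
    intro l _ hl
    have h1 := Multiset.le_count_iff_replicate_le.1 hl
    have h2 := congrArg Multiset.sum (Multiset.sub_add_cancel h1)
    rw [Multiset.sum_add, l.parts_sum, Multiset.sum_replicate, smul_eq_mul, mul_comm] at h2
    omega

/-- The sum of the parts of a partition, each value `j` being counted once for every `m` from 1 to its
multiplicity. -/
lemma partition_sum (n : ℕ) (l : Nat.Partition n) :
    n = ∑ j ∈ Icc 1 n, ∑ m ∈ Icc 1 n, if m ≤ l.parts.count j then j else 0 := by
  have h1 : ∑ j ∈ Icc 1 n, l.parts.count j * j = n := by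
    conv_rhs => rw [← l.parts_sum, Finset.sum_multiset_count]
    symm
    refine sum_subset ?_ ?_
    · intro j hj
      rw [Multiset.mem_toFinset] at hj
      exact mem_Icc.2 ⟨l.parts_pos hj, l.le_of_mem_parts hj⟩
    · intro j _ hj
      rw [Multiset.mem_toFinset] at hj
      rw [Multiset.count_eq_zero_of_notMem hj, zero_smul]
  conv_lhs => rw [← h1]
  refine sum_congr rfl fun j hj => ?_
  rw [← sum_filter, sum_const, smul_eq_mul]
  congr 1
  have : l.parts.count j ≤ n := by
    refine (le_trans ?_ (single_le_sum (f := fun j => l.parts.count j * j)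
      (fun _ _ => Nat.zero_le _) hj)).trans h1.le
    exact Nat.le_mul_of_pos_right _ (mem_Icc.1 hj).1
  have e : {m ∈ Icc 1 n | m ≤ l.parts.count j} = Icc 1 (l.parts.count j) := by
    ext m; simp only [mem_filter, mem_Icc]; omega
  rw [e, Nat.card_Icc]; omega

/-- Euler's recurrence `n p(n) = ∑ σ₁(i) p(n - i)`, by double counting with `partition_sum` and
`card_count_ge`. -/
lemma partition_recurrence (n : ℕ) :
    n * numPartitions n = ∑ ij ∈ antidiagonal n,
      (∑ w ∈ ij.1.divisorsAntidiagonal, w.1) * numPartitions ij.2 := by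
  have h1 : n * numPartitions n = ∑ l : Nat.Partition n,
      ∑ j ∈ Icc 1 n, ∑ m ∈ Icc 1 n, if m ≤ l.parts.count j then j else 0 := by
    rw [← sum_congr rfl fun l _ => partition_sum n l, sum_const, card_univ, numPartitions,
      Nat.card_eq_fintype_card, smul_eq_mul, mul_comm]
  have h2 : ∀ j ∈ Icc 1 n, ∀ m ∈ Icc 1 n,
      (∑ l : Nat.Partition n, if m ≤ l.parts.count j then j else 0)
      = if j * m ≤ n then j * numPartitions (n - j * m) else 0 := by
    intro j hj m _
    rw [← sum_filter, sum_const, card_count_ge n j m (mem_Icc.1 hj).1, smul_eq_mul, mul_comm]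
    split_ifs <;> simp
  rw [h1, sum_comm]
  simp only [sum_comm (s := (univ : Finset (Nat.Partition n)))]
  rw [sum_congr rfl fun j hj => sum_congr rfl fun m hm => h2 j hj m hm, ← sum_product',
    ← sum_filter]
  simp only [sum_mul, sum_sigma']
  refine sum_nbij' (fun v => ⟨(v.1 * v.2, n - v.1 * v.2), v⟩) (fun w => w.2) ?_ ?_ ?_ ?_ ?_
  · rintro ⟨j, m⟩ h
    simp only [mem_filter, mem_product, mem_Icc] at h
    simp only [mem_sigma, HasAntidiagonal.mem_antidiagonal, Nat.mem_divisorsAntidiagonal]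
    exact ⟨by omega, trivial, Nat.mul_ne_zero (by omega) (by omega)⟩
  · rintro ⟨⟨i, k⟩, j, m⟩ h
    simp only [mem_sigma, HasAntidiagonal.mem_antidiagonal, Nat.mem_divisorsAntidiagonal] at h
    simp only [mem_filter, mem_product, mem_Icc]
    obtain ⟨rfl, rfl, h0⟩ := h
    simp only [mul_ne_zero_iff, ← Nat.pos_iff_ne_zero] at h0
    have := Nat.le_mul_of_pos_right j h0.2
    have := Nat.le_mul_of_pos_left m h0.1
    exact ⟨⟨⟨h0.1, by omega⟩, h0.2, by omega⟩, by omega⟩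
  · rintro ⟨j, m⟩ h; rfl
  · rintro ⟨⟨i, k⟩, j, m⟩ h
    simp only [mem_sigma, HasAntidiagonal.mem_antidiagonal, Nat.mem_divisorsAntidiagonal] at h
    obtain ⟨rfl, rfl, h0⟩ := h
    simp
  · rintro ⟨j, m⟩ h; rfl

lemma part_ode : X * d⁄dX (ZMod 11) partSeries = sigmaSeries * partSeries := by
  ext n
  rw [coeff_X_mul_derivative, coeff_mul]
  simp only [partSeries, sigmaSeries, coeff_mk]
  exact_mod_cast congrArg (Nat.cast : ℕ → ZMod 11) (partition_recurrence n)

/-- A 3-colored partition of `k`, encoded by first splitting `k = i + j` and then `j = u + v`; this is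
the index set of the `k`-th coefficient of a product of three series. -/
def tripleEquiv (k : ℕ) :
    {x : (Σ a : ℕ, Nat.Partition a) × (Σ a : ℕ, Nat.Partition a) ×
      (Σ a : ℕ, Nat.Partition a) // x.1.1 + x.2.1.1 + x.2.2.1 = k} ≃
    Σ ij : antidiagonal k, Nat.Partition ij.1.1 ×
      Σ uv : antidiagonal ij.1.2, Nat.Partition uv.1.1 × Nat.Partition uv.1.2 where
  toFun x := ⟨⟨(x.1.1.1, x.1.2.1.1 + x.1.2.2.1), HasAntidiagonal.mem_antidiagonal.2
      (by rw [← add_assoc]; exact x.2)⟩, x.1.1.2,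
    ⟨⟨(x.1.2.1.1, x.1.2.2.1), HasAntidiagonal.mem_antidiagonal.2 rfl⟩, x.1.2.1.2, x.1.2.2.2⟩⟩
  invFun y := ⟨(⟨_, y.2.1⟩, ⟨_, y.2.2.2.1⟩, ⟨_, y.2.2.2.2⟩), by
    have h1 := HasAntidiagonal.mem_antidiagonal.1 y.1.2
    have h2 := HasAntidiagonal.mem_antidiagonal.1 y.2.2.1.2
    dsimp only
    omega⟩
  left_inv x := rfl
  right_inv := by
    rintro ⟨⟨⟨i, j⟩, h⟩, l, ⟨⟨u, v⟩, h'⟩, l', l''⟩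
    obtain rfl := HasAntidiagonal.mem_antidiagonal.1 h'
    rfl

lemma p3_eq (k : ℕ) : (p3 k : ZMod 11) = coeff k (partSeries ^ 3) := by
  have h : p3 k = ∑ ij ∈ antidiagonal k, numPartitions ij.1 *
      ∑ uv ∈ antidiagonal ij.2, numPartitions uv.1 * numPartitions uv.2 := by
    rw [p3, Nat.card_congr (tripleEquiv k), Nat.card_sigma, ← sum_coe_sort (antidiagonal k)]
    refine sum_congr rfl fun ij _ => ?_
    rw [Nat.card_prod, Nat.card_sigma, ← sum_coe_sort (antidiagonal ij.1.2)]
    simp only [Nat.card_prod]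
    rfl
  rw [h, show partSeries ^ 3 = partSeries * (partSeries * partSeries) by ring]
  simp only [coeff_mul, partSeries, coeff_mk]
  push_cast
  rfl

/-! ### The congruences -/

lemma p3_vanish (k : ℕ) (hk : k % 11 = 7) : (p3 k : ZMod 11) = 0 := by
  have h : X * d⁄dX (ZMod 11) (partSeries ^ 3 * auxSeries) + 4 * (partSeries ^ 3 * auxSeries)
      = partSeries ^ 3 := by
    rw [Derivation.leibniz, Derivation.leibniz_pow]
    simp only [smul_eq_mul, nsmul_eq_mul]
    push_cast
    linear_combination 3 * auxSeries * partSeries ^ 2 * part_ode + partSeries ^ 3 * aux_ode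
  rw [p3_eq, ← h, map_add, coeff_X_mul_derivative,
    show (4 : PowerSeries (ZMod 11)) = C 4 from (map_ofNat C 4).symm, coeff_C_mul, ← add_mul]
  have : ((k + 4 : ℕ) : ZMod 11) = 0 := (ZMod.natCast_eq_zero_iff _ _).2 (by omega)
  push_cast at this
  rw [this, zero_mul]

/-- In base 11 the last digits of `2t` and `2t + 1` are 8 and 9, and the remaining digits agree, so
Lucas leaves the factor `C(r, 8) + 2 C(r, 9)` with `r = (n + t) mod 11`; for `r = 9` it is
`9 + 2 = 11`. -/
lemma cm2_vanish (n J : ℕ) (h4 : n % 11 ≠ 4) (h6 : n % 11 ≠ 6) :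
    (cm2 n (11 * J + 4) : ZMod 11) = 0 := by
  have key : ∀ r < 11, r ≠ 8 → r ≠ 10 →
      ((r.choose 8 : ℕ) : ZMod 11) + 2 * ((r.choose 9 : ℕ) : ZMod 11) = 0 := by decide
  have : Fact (Nat.Prime 11) := ⟨by norm_num⟩
  have e1 := (ZMod.natCast_eq_natCast_iff _ _ _).2
    (Choose.choose_modEq_choose_mod_mul_choose_div_nat (n := n + (11 * J + 4))
      (k := 2 * (11 * J + 4)) (p := 11))
  have e2 := (ZMod.natCast_eq_natCast_iff _ _ _).2
    (Choose.choose_modEq_choose_mod_mul_choose_div_nat (n := n + (11 * J + 4))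
      (k := 2 * (11 * J + 4) + 1) (p := 11))
  rw [show 2 * (11 * J + 4) % 11 = 8 by omega, show 2 * (11 * J + 4) / 11 = 2 * J by omega] at e1
  rw [show (2 * (11 * J + 4) + 1) % 11 = 9 by omega,
    show (2 * (11 * J + 4) + 1) / 11 = 2 * J by omega] at e2
  have hk := key ((n + (11 * J + 4)) % 11) (Nat.mod_lt _ (by norm_num)) (by omega) (by omega)
  unfold cm2
  push_cast at e1 e2 ⊢
  rw [e1, e2]
  linear_combination ((-1) ^ (n + (11 * J + 4)) *
    (((n + (11 * J + 4)) / 11).choose (2 * J) : ZMod 11)) * hk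

theorem stmt14 (J N : ℕ) :
    (11 : ℤ) ∣ MOm2 (11 * J + 4) (11 * N + 6) := by
  refine (ZMod.intCast_zmod_eq_zero_iff_dvd _ 11).1 ?_
  unfold MOm2
  push_cast
  refine sum_eq_zero fun kn hkn => ?_
  have hN := (mem_filter.1 hkn).2
  by_cases hn : kn.2 % 11 = 4 ∨ kn.2 % 11 = 6
  · rw [p3_vanish, zero_mul]
    -- halving `n (n + 1)` requires its residue modulo 22
    have h22 : kn.2 * (kn.2 + 1) % 22 = 20 := by
      have h : kn.2 % 22 = 4 ∨ kn.2 % 22 = 15 ∨ kn.2 % 22 = 6 ∨ kn.2 % 22 = 17 := by omega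
      rcases h with h | h | h | h <;> simp [Nat.mul_mod, Nat.add_mod, h]
    omega
  · rw [not_or] at hn
    rw [cm2_vanish _ _ hn.1 hn.2, mul_zero]
end
end

section
/- For all integers J ≥ 0 and N ≥ 0, MO(−2, 11J+10; 11N+7) ≡ 0 (mod 11). -/
/-!
Write `t = 11 J + 10`. By Lucas' theorem `11` divides `cm2 n t` unless `n` is `0` or `10` modulo
`11` (`cm2_dvd`). For the remaining `n` the triangular number `n (n + 1) / 2` is divisible by `11`,
so the matching `k` is `7` modulo `11`, and the theorem reduces to the congruence
`11 ∣ p₋₃(11 m + 7)` (`p3_dvd`).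

That congruence is proved over `ZMod 11` with classical theta series. Let `f = ∏ (1 - q ^ i)` be
Euler's product, `pentagonalSeries` in Mathlib. The generating function of `p₋₃` is `f⁻¹ ^ 3`, and
`f⁻¹ ^ 3 = f ^ 9 * (f⁻¹) ^ 11 * f⁻¹`, where `(f⁻¹) ^ 11` is a power series in `q ^ 11`.
Jacobi's identity expresses `f ^ 3` as `-∑ (-1) ^ a a q ^ (a (a - 1) / 2)` over `a : ℤ`, and
`∑ (-1) ^ a q ^ (a (a - 1) / 2) = 0`. Hence `2 f ^ 9` is the sum over `a, b, c : ℤ` of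
`(-1) ^ (a + b + c) (a - c)² (b - c) q ^ (a (a - 1) / 2 + b (b - 1) / 2 + c (c - 1) / 2)`
(`hasSum_tripleTerm`). For fixed `i = a - c` and `j = b - c` the sum over `c` is zero or, by the
pentagonal number theorem, `± i² j q ^ E f` with `3 E + 1 = i² - i j + j²` (`fiber`). Thus
`2 f⁻¹ ^ 3` is the sum of the terms `± i² j q ^ E (f⁻¹) ^ 11`, and such a term contributes to an
exponent `11 m + 7` only if `E` is `7` modulo `11`, so that `11` divides `i² - i j + j²`.
As `-3` is not a square modulo `11`, this forces `11 ∣ i` and `11 ∣ j`, and the coefficient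
`i² j` vanishes.

Mathlib has the pentagonal number theorem but not Jacobi's identity. The latter is derived from a
finite form of the triple product: the coefficients of
`(1 + z⁻¹) ∏ (1 + z q ^ k) (1 + z⁻¹ q ^ k)`, a product over `k ≤ n`, are Gaussian binomial
coefficients (`thetaCoeff_mul`), and the derivative at `z = -1` gives Jacobi's identity as
`n → ∞`.
-/

open Finset

noncomputable section

/-! ### Lucas' theorem and the reduction to three-colored partitions -/

instance : Fact (Nat.Prime 11) := ⟨by norm_num⟩

/-- By Lucas, `C(n+t, 2t)` and `C(n+t, 2t+1)` carry the factors `C((n+10) % 11, 9)` and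
`C((n+10) % 11, 10)` when `t ≡ 10`; both vanish unless `n + 10 ≡ 9` or `10`. -/
lemma cm2_dvd (J n : ℕ) (h0 : n % 11 ≠ 0) (h10 : n % 11 ≠ 10) :
    (11 : ℤ) ∣ cm2 n (11 * J + 10) := by
  have key : ∀ k : ℕ, ((n + (11 * J + 10)) % 11).choose (k % 11) = 0 →
      (11 : ℤ) ∣ ((n + (11 * J + 10)).choose k : ℤ) := by
    intro k hk
    have h := Choose.choose_modEq_choose_mod_mul_choose_div_nat (p := 11)
      (n := n + (11 * J + 10)) (k := k)
    rw [hk, zero_mul] at h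
    exact_mod_cast (Nat.modEq_zero_iff_dvd.mp h)
  unfold cm2
  refine Dvd.dvd.mul_left (dvd_add (key _ ?_) (Dvd.dvd.mul_left (key _ ?_) _)) _ <;>
    exact Nat.choose_eq_zero_of_lt (by omega)

/-- The triangular number `n(n+1)/2` is divisible by `11` when `n ≡ 0` or `10` modulo `11`. -/
lemma tri_dvd (n : ℕ) (h : n % 11 = 0 ∨ n % 11 = 10) : n * (n + 1) / 2 % 11 = 0 := by
  have h2 : 2 ∣ n * (n + 1) := (Nat.even_mul_succ_self n).two_dvd
  have h11 : 11 ∣ n * (n + 1) := by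
    rcases h with h | h
    · exact Dvd.dvd.mul_right (by omega) _
    · exact Dvd.dvd.mul_left (by omega) _
  omega

/-- Modulo `11` only the terms with `n ≡ 0, 10` survive, and these have `k ≡ 7`. -/
lemma main_of_p3 (hp : ∀ m, 11 ∣ p3 (11 * m + 7)) (J N : ℕ) :
    (11 : ℤ) ∣ MOm2 (11 * J + 10) (11 * N + 7) := by
  unfold MOm2
  refine Finset.dvd_sum fun ⟨k, n⟩ hkn => ?_
  simp only [Finset.mem_filter] at hkn ⊢
  by_cases h : n % 11 = 0 ∨ n % 11 = 10
  · have ht := tri_dvd n h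
    have hk : k = 11 * (k / 11) + 7 := by omega
    rw [hk]
    exact Dvd.dvd.mul_right (by exact_mod_cast hp _) _
  · push Not at h
    exact Dvd.dvd.mul_left (cm2_dvd J n h.1 h.2) _

/-- Counting pairs by total size is convolution: fibers of `(x, y) ↦ s x + t y`. -/
lemma card_pair {α β : Type} (s : α → ℕ) (t : β → ℕ)
    (hs : ∀ n, Finite {x // s x = n}) (ht : ∀ n, Finite {y // t y = n}) (n : ℕ) :
    Finite {z : α × β // s z.1 + t z.2 = n} ∧
    Nat.card {z : α × β // s z.1 + t z.2 = n} =
      ∑ p ∈ antidiagonal n, Nat.card {x // s x = p.1} * Nat.card {y // t y = p.2} := by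
  let e : {z : α × β // s z.1 + t z.2 = n} ≃
      Σ p : antidiagonal n, {x // s x = p.1.1} × {y // t y = p.1.2} :=
    { toFun := fun z => ⟨⟨(s z.1.1, t z.1.2), mem_antidiagonal.2 z.2⟩, ⟨z.1.1, rfl⟩, ⟨z.1.2, rfl⟩⟩
      invFun := fun w => ⟨(w.2.1.1, w.2.2.1), by
        change s w.2.1.1 + t w.2.2.1 = n
        rw [w.2.1.2, w.2.2.2]; exact mem_antidiagonal.1 w.1.2⟩
      left_inv := fun z => rfl
      right_inv := by
        rintro ⟨⟨⟨a, b⟩, h⟩, ⟨x, hx⟩, ⟨y, hy⟩⟩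
        dsimp at hx hy
        subst hx hy
        rfl }
  refine ⟨Finite.of_equiv _ e.symm, ?_⟩
  rw [Nat.card_congr e, Nat.card_sigma]
  simp only [Nat.card_prod]
  exact Finset.sum_coe_sort (antidiagonal n)
    (fun p => Nat.card {x // s x = p.1} * Nat.card {y // t y = p.2})

/-- The generating function of `p3` is the cube of that of `numPartitions`, coefficientwise. -/
lemma p3_eq_s15 (n : ℕ) : p3 n = ∑ p ∈ antidiagonal n, numPartitions p.1 *
    ∑ r ∈ antidiagonal p.2, numPartitions r.1 * numPartitions r.2 := by
  have h1 : ∀ m, Nat.card {x : (Σ a : ℕ, Nat.Partition a) // x.1 = m} = numPartitions m :=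
    fun m => Nat.card_congr (Equiv.sigmaSubtype m)
  have hf : ∀ m, Finite {x : (Σ a : ℕ, Nat.Partition a) // x.1 = m} :=
    fun m => Finite.of_equiv _ (Equiv.sigmaSubtype m).symm
  have h2 := card_pair (fun x : (Σ a : ℕ, Nat.Partition a) => x.1)
    (fun x : (Σ a : ℕ, Nat.Partition a) => x.1) hf hf
  have h3 := (card_pair (fun x : (Σ a : ℕ, Nat.Partition a) => x.1)
    (fun y : (Σ a : ℕ, Nat.Partition a) × (Σ a : ℕ, Nat.Partition a) => y.1.1 + y.2.1)
    hf (fun m => (h2 m).1) n).2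
  simp only [fun m => (h2 m).2, h1, ← add_assoc] at h3
  exact h3

open PowerSeries

/-- The derivative of an eleventh power vanishes in characteristic `11`, so an eleventh power is
supported on exponents divisible by `11`. -/
lemma coeff_pow_eleven (g : (ZMod 11)⟦X⟧) (n : ℕ) (hn : n % 11 ≠ 0) : coeff n (g ^ 11) = 0 := by
  obtain ⟨m, rfl⟩ : ∃ m, n = m + 1 := ⟨n - 1, by omega⟩
  have h : d⁄dX (ZMod 11) (g ^ 11) = 0 := by
    rw [Derivation.leibniz_pow]
    rw [← Nat.cast_smul_eq_nsmul (ZMod 11)]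
    have : ((11 : ℕ) : ZMod 11) = 0 := by decide
    rw [this, zero_smul]
  have h2 := congrArg (coeff m) h
  rw [coeff_derivative, map_zero] at h2
  refine (mul_eq_zero.1 h2).resolve_right fun h3 => hn ?_
  have : ((m + 1 : ℕ) : ZMod 11) = 0 := by exact_mod_cast h3
  exact Nat.mod_eq_zero_of_dvd ((ZMod.natCast_eq_zero_iff _ _).1 this)

/-! ### Jacobi's identity -/

section Jacobi

variable {R : Type*} [CommRing R]

/-- The finite product `(q; q)_m = ∏_{i=1}^{m} (1 - q^i)`. -/
def qfac (R : Type*) [CommRing R] (m : ℕ) : R⟦X⟧ := ∏ i ∈ range m, (1 - X ^ (i + 1))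

lemma qfac_succ (m : ℕ) : qfac R (m + 1) = qfac R m * (1 - X ^ (m + 1)) := prod_range_succ _ _

/-- The coefficient of `z ^ j` (equivalently, of `z ^ (-1 - j)`) in the finite theta product
`(1 + z⁻¹) ∏_{k=1}^{n} (1 + z q^k) (1 + z⁻¹ q^k)`, which is `q^(j(j+1)/2)` times the Gaussian
binomial coefficient `[2n+1; n-j]`.  The recursion in `n` multiplies by
`(1 + q^(2k)) + q^k (z + z⁻¹)` with `k = n + 1`. -/
def thetaCoeff (R : Type*) [CommRing R] : ℕ → ℕ → R⟦X⟧
  | 0, 0 => 1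
  | 0, _ + 1 => 0
  | n + 1, 0 => (1 + X ^ (2 * n + 2)) * thetaCoeff R n 0 +
      X ^ (n + 1) * (thetaCoeff R n 1 + thetaCoeff R n 0)
  | n + 1, j + 1 => (1 + X ^ (2 * n + 2)) * thetaCoeff R n (j + 1) +
      X ^ (n + 1) * (thetaCoeff R n (j + 2) + thetaCoeff R n j)

lemma thetaCoeff_eq_zero (n : ℕ) : ∀ j, n < j → thetaCoeff R n j = 0 := by
  induction n with
  | zero => intro j hj; obtain ⟨j, rfl⟩ : ∃ i, j = i + 1 := ⟨j - 1, by omega⟩; rfl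
  | succ n ih =>
    intro j hj
    obtain ⟨j, rfl⟩ : ∃ i, j = i + 1 := ⟨j - 1, by omega⟩
    rw [thetaCoeff, ih _ (by omega), ih _ (by omega), ih _ (by omega)]
    ring

/-- The inductive step of `sum_thetaCoeff` for a truncated sum; the last summand is the boundary
term of the truncation. -/
lemma sum_thetaCoeff_aux (n m : ℕ) :
    ∑ j ∈ range (m + 1), (-1) ^ j * (2 * (j : R⟦X⟧) + 1) * thetaCoeff R (n + 1) j =
      (1 - X ^ (n + 1)) ^ 2 *
        ∑ j ∈ range (m + 1), (-1) ^ j * (2 * (j : R⟦X⟧) + 1) * thetaCoeff R n j +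
      (-1) ^ m * X ^ (n + 1) * ((2 * (m : R⟦X⟧) + 1) * thetaCoeff R n (m + 1) +
        (2 * (m : R⟦X⟧) + 3) * thetaCoeff R n m) := by
  induction m with
  | zero => simp [thetaCoeff]; ring
  | succ m ih =>
    rw [sum_range_succ, ih, sum_range_succ _ (m + 1), thetaCoeff]
    push_cast
    ring

/-- The value of `-d/dz` of the theta product at `z = -1`: the factor `1 + z⁻¹` vanishes there, so
only its derivative matters, and the other factors give `∏ (1 - q^k) ^ 2`. -/
lemma sum_thetaCoeff (n : ℕ) : ∀ m, n < m →
    ∑ j ∈ range m, (-1) ^ j * (2 * (j : R⟦X⟧) + 1) * thetaCoeff R n j = qfac R n ^ 2 := by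
  induction n with
  | zero =>
    intro m hm
    obtain ⟨m, rfl⟩ : ∃ i, m = i + 1 := ⟨m - 1, by omega⟩
    rw [sum_range_succ', sum_eq_zero]
    · simp [thetaCoeff, qfac]
    · intros; simp [thetaCoeff]
  | succ n ih =>
    intro m hm
    obtain ⟨m, rfl⟩ : ∃ i, m = i + 1 := ⟨m - 1, by omega⟩
    rw [sum_thetaCoeff_aux, ih _ (by omega), thetaCoeff_eq_zero _ _ (by omega : n < m),
      thetaCoeff_eq_zero _ _ (by omega : n < m + 1), qfac_succ]
    ring

/-- The closed form of `thetaCoeff` as a Gaussian binomial coefficient, cleared of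
denominators. -/
lemma thetaCoeff_mul (n : ℕ) : ∀ j d, n = j + d →
    thetaCoeff R n j * (qfac R d * qfac R (2 * j + d + 1)) =
      X ^ (j * (j + 1) / 2) * qfac R (2 * n + 1) := by
  have tri : ∀ j : ℕ, (j + 1) * (j + 1 + 1) / 2 = j * (j + 1) / 2 + (j + 1) := by
    intro j
    rw [show (j + 1) * (j + 1 + 1) = j * (j + 1) + (j + 1) * 2 by ring,
      Nat.add_mul_div_right _ _ two_pos]
  induction n with
  | zero =>
    intro j d h
    obtain ⟨rfl, rfl⟩ : j = 0 ∧ d = 0 := by omega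
    simp [thetaCoeff, qfac]
  | succ n ih =>
    intro j d h
    rw [show 2 * (n + 1) + 1 = 2 * n + 1 + 1 + 1 by ring, qfac_succ (2 * n + 1 + 1),
      qfac_succ (2 * n + 1)]
    -- Versions of the induction hypothesis at `j + 1` and `j + 2` that also cover the
    -- boundary cases `d = 0` and `d = 1`, where both sides vanish.
    have hB : ∀ j d, n = j + d → thetaCoeff R n (j + 1) * (qfac R d * qfac R (2 * j + d + 2)) =
        X ^ (j * (j + 1) / 2) * qfac R (2 * n + 1) * (X ^ (j + 1) - X ^ (j + 1 + d)) := by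
      intro j d h
      rcases d with _ | d
      · rw [thetaCoeff_eq_zero _ _ (by omega)]; simp
      · have := ih (j + 1) d (by omega)
        rw [tri, show 2 * (j + 1) + d + 1 = 2 * j + (d + 1) + 2 by ring] at this
        rw [qfac_succ]
        linear_combination (1 - X ^ (d + 1)) * this
    have hC : ∀ j d, n = j + d → thetaCoeff R n (j + 2) * (qfac R d * qfac R (2 * j + d + 3)) =
        X ^ (j * (j + 1) / 2) * qfac R (2 * n + 1) * X ^ (j + 1) * (1 - X ^ d) *
          (X ^ (j + 2) - X ^ (j + 1 + d)) := by
      intro j d h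
      rcases d with _ | d
      · rw [thetaCoeff_eq_zero _ _ (by omega)]; simp
      · have := hB (j + 1) d (by omega)
        rw [tri, show 2 * (j + 1) + d + 2 = 2 * j + (d + 1) + 3 by ring] at this
        rw [qfac_succ]
        linear_combination (1 - X ^ (d + 1)) * this
    rcases j with _ | j
    · obtain rfl : d = n + 1 := by omega
      have h0 := ih 0 n (by omega)
      have h1 := hB 0 n (by omega)
      simp only [mul_zero, zero_add, zero_mul, Nat.zero_div] at h0 h1 ⊢
      have q1 : qfac R (n + 1) = qfac R n * (1 - X ^ (n + 1)) := qfac_succ _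
      have q2 : qfac R (n + 2) = qfac R n * (1 - X ^ (n + 1)) * (1 - X ^ (n + 2)) := by
        rw [← q1]; exact qfac_succ _
      rw [q2] at h1
      rw [q1] at h0
      rw [thetaCoeff, show n + 1 + 1 = n + 2 from rfl, q1, q2]
      linear_combination (1 + X ^ (2 * n + 2) + X ^ (n + 1)) * (1 - X ^ (n + 1)) *
        (1 - X ^ (n + 2)) * h0 + X ^ (n + 1) * (1 - X ^ (n + 1)) * h1
    · obtain rfl : n = j + d := by omega
      have hA := ih j d rfl
      have hB := hB j d rfl
      have hC := hC j d rfl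
      have q1 : qfac R (2 * j + d + 2) = qfac R (2 * j + d + 1) * (1 - X ^ (2 * j + d + 2)) :=
        qfac_succ _
      have q2 : qfac R (2 * j + d + 3) = qfac R (2 * j + d + 1) * (1 - X ^ (2 * j + d + 2)) *
          (1 - X ^ (2 * j + d + 3)) := by
        rw [← q1]; exact qfac_succ _
      rw [q1] at hB
      rw [q2] at hC
      rw [thetaCoeff, tri, show 2 * (j + 1) + d + 1 = 2 * j + d + 3 by ring, q2]
      linear_combination (1 + X ^ (2 * (j + d) + 2)) * (1 - X ^ (2 * j + d + 3)) * hB +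
        X ^ (j + d + 1) * hC +
        X ^ (j + d + 1) * (1 - X ^ (2 * j + d + 2)) * (1 - X ^ (2 * j + d + 3)) * hA

/-- Partial products of Euler's product agree with the full product up to degree `m`. -/
lemma X_pow_dvd_sub_qfac (m : ℕ) : X ^ (m + 1) ∣ pentagonalSeries R - qfac R m := by
  have stab : ∀ k, X ^ (m + 1) ∣ qfac R (m + k) - qfac R m := by
    intro k
    induction k with
    | zero => simp
    | succ k ih =>
      rw [← add_assoc, qfac_succ]
      have : X ^ (m + 1) ∣ (X : R⟦X⟧) ^ (m + k + 1) := pow_dvd_pow _ (by omega)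
      have := dvd_sub ih (this.mul_left (qfac R (m + k)))
      convert this using 1
      ring
  rw [X_pow_dvd_iff]
  intro d hd
  let _ : TopologicalSpace R := ⊥
  have _ : DiscreteTopology R := ⟨rfl⟩
  open scoped PowerSeries.WithPiTopology in
  have h := (WithPiTopology.tendsto_iff_coeff_tendsto _ _ _ _).1
    (WithPiTopology.hasProd_one_sub_X_pow R).tendsto_prod_nat d
  rw [nhds_discrete, Filter.tendsto_pure] at h
  obtain ⟨k, hk⟩ := (h.and (Filter.eventually_ge_atTop m)).exists
  obtain ⟨k, rfl⟩ := Nat.exists_eq_add_of_le hk.2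
  rw [map_sub, ← hk.1]
  have := X_pow_dvd_iff.1 (stab k) d hd
  rwa [map_sub] at this

lemma isUnit_pentagonalSeries : IsUnit (pentagonalSeries R) := by
  have := X_pow_dvd_sub_qfac (R := R) 0
  rw [isUnit_iff_constantCoeff]
  have := X_pow_dvd_iff.1 this 0 (by norm_num)
  simp only [qfac, range_zero, prod_empty, map_sub, coeff_zero_eq_constantCoeff, map_one,
    sub_eq_zero] at this
  simp [this]

lemma isUnit_qfac (m : ℕ) : IsUnit (qfac R m) := by
  simp [isUnit_iff_constantCoeff, qfac]

lemma X_pow_dvd_thetaCoeff (n j : ℕ) (h : j ≤ n) : X ^ (j * (j + 1) / 2) ∣ thetaCoeff R n j := by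
  obtain ⟨d, rfl⟩ := Nat.exists_eq_add_of_le h
  have h1 := thetaCoeff_mul (R := R) (j + d) j d rfl
  exact (((isUnit_qfac d).mul (isUnit_qfac (2 * j + d + 1))).dvd_mul_right).1 ⟨_, h1⟩

/-- As `n → ∞`, the Gaussian binomial coefficient `[2n+1; n-j]` tends to `1 / (q; q)_∞`. -/
lemma thetaCoeff_congr (n j : ℕ) (h : j ≤ n) :
    X ^ (n - j + 1) ∣ thetaCoeff R n j * pentagonalSeries R - X ^ (j * (j + 1) / 2) := by
  obtain ⟨d, rfl⟩ := Nat.exists_eq_add_of_le h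
  obtain ⟨u, hu⟩ := isUnit_pentagonalSeries (R := R)
  have key : ∀ m, d ≤ m → X ^ (d + 1) ∣ pentagonalSeries R - qfac R m := fun m hm =>
    (pow_dvd_pow _ (by omega)).trans (X_pow_dvd_sub_qfac m)
  obtain ⟨a, ha⟩ := key d le_rfl
  obtain ⟨b, hb⟩ := key (2 * j + d + 1) (by omega)
  obtain ⟨c, hc⟩ := key (2 * (j + d) + 1) (by omega)
  have h1 := thetaCoeff_mul (R := R) (j + d) j d rfl
  rw [show j + d - j + 1 = d + 1 by omega]
  have h2 : X ^ (d + 1) ∣ (thetaCoeff R (j + d) j * pentagonalSeries R - X ^ (j * (j + 1) / 2)) *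
      pentagonalSeries R := by
    rw [sub_eq_iff_eq_add, ← sub_eq_iff_eq_add'] at ha hb hc
    rw [← ha, ← hb, ← hc] at h1
    refine ⟨thetaCoeff R (j + d) j * (a * pentagonalSeries R + b * pentagonalSeries R -
      X ^ (d + 1) * a * b) - X ^ (j * (j + 1) / 2) * c, ?_⟩
    linear_combination h1
  exact (isUnit_pentagonalSeries.dvd_mul_right).1 h2

/-- **Jacobi's identity**, modulo `q^(K+1)`. -/
lemma jacobi_congr (K M : ℕ) (hM : K < M) :
    X ^ (K + 1) ∣ pentagonalSeries R ^ 3 -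
      ∑ j ∈ range M, (-1) ^ j * (2 * (j : R⟦X⟧) + 1) * X ^ (j * (j + 1) / 2) := by
  -- With `n = 2 M`, the congruence for `thetaCoeff n j` has the required order for all `j < M`,
  -- and the terms with `j ≥ M` are negligible.
  have h1 := sum_thetaCoeff (R := R) (2 * M) (M + (M + 1)) (by omega)
  rw [sum_range_add] at h1
  obtain ⟨a, ha⟩ := (pow_dvd_pow X (by omega : K + 1 ≤ 2 * M + 1)).trans
    (X_pow_dvd_sub_qfac (R := R) (2 * M))
  have h2 : X ^ (K + 1) ∣ ∑ j ∈ range M, (-1) ^ j * (2 * (j : R⟦X⟧) + 1) *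
      (thetaCoeff R (2 * M) j * pentagonalSeries R - X ^ (j * (j + 1) / 2)) := by
    refine dvd_sum fun j hj => Dvd.dvd.mul_left ?_ _
    rw [mem_range] at hj
    exact (pow_dvd_pow _ (by omega)).trans (thetaCoeff_congr (2 * M) j (by omega))
  have h3 : X ^ (K + 1) ∣ ∑ x ∈ range (M + 1), (-1) ^ (M + x) * (2 * ((M + x : ℕ) : R⟦X⟧) + 1) *
      thetaCoeff R (2 * M) (M + x) := by
    refine dvd_sum fun x hx => Dvd.dvd.mul_left ?_ _
    rw [mem_range] at hx
    refine (pow_dvd_pow _ ?_).trans (X_pow_dvd_thetaCoeff (2 * M) (M + x) (by omega))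
    rw [Nat.le_div_iff_mul_le two_pos]
    nlinarith
  obtain ⟨b, hb⟩ := h2
  obtain ⟨c, hc⟩ := h3
  simp only [mul_sub, sum_sub_distrib, ← mul_assoc, ← sum_mul] at hb
  rw [hc] at h1
  refine ⟨b + c * pentagonalSeries R +
    a * pentagonalSeries R * (pentagonalSeries R + qfac R (2 * M)), ?_⟩
  linear_combination hb - pentagonalSeries R * h1 +
    pentagonalSeries R * (pentagonalSeries R + qfac R (2 * M)) * ha

end Jacobi

/-! ### Three-colored partitions modulo eleven -/

section Eleven

open scoped PowerSeries.WithPiTopology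
open WithPiTopology

/-- The sign `(-1) ^ a` in `ZMod 11`. -/
def sgn (a : ℤ) : ZMod 11 := ((a.negOnePow : ℤ) : ZMod 11)

lemma sgn_add (a b : ℤ) : sgn (a + b) = sgn a * sgn b := by
  simp [sgn, Int.negOnePow_add]

lemma sgn_congr {a b : ℤ} (h : Even (a - b)) : sgn a = sgn b := by
  rw [sgn, (Int.negOnePow_eq_iff a b).2 h, sgn]

lemma sgn_congr_neg {a b : ℤ} (h : Even (a - b - 1)) : sgn a = -sgn b := by
  rw [sgn_congr (a := a) (b := b + 1) (by convert h using 1; ring), sgn_add]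
  simp [sgn]

/-- The triangular number `a(a-1)/2` for `a : ℤ`. -/
def tri (a : ℤ) : ℕ := (a * (a - 1) / 2).toNat

lemma two_mul_tri (a : ℤ) : 2 * (tri a : ℤ) = a * (a - 1) := by
  have h1 : 2 * (a * (a - 1) / 2) = a * (a - 1) :=
    Int.two_mul_ediv_two_of_even (by rw [mul_comm]; simpa using Int.even_mul_succ_self (a - 1))
  have h2 : 0 ≤ a * (a - 1) := by
    rcases le_or_gt a 0 with h | h <;> nlinarith
  unfold tri
  omega

lemma mem_Icc_of_tri (a : ℤ) {N : ℕ} (h : tri a ≤ N) : a ∈ Set.Icc (-(N : ℤ)) (N + 1) := by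
  have h1 := two_mul_tri a
  zify at h
  constructor
  · rcases le_or_gt 0 a with h2 | h2 <;> nlinarith
  · rcases le_or_gt a 1 with h2 | h2 <;> nlinarith

/-- A family of monomials, finitely many of each degree, is summable. -/
lemma summable_mono {ι : Type*} (w : ι → ℕ) (hw : ∀ N, {i | w i = N}.Finite) (c : ι → ZMod 11) :
    Summable fun i => C (c i) * (X : (ZMod 11)⟦X⟧) ^ w i := by
  rw [summable_iff_summable_coeff]
  intro d
  refine summable_of_hasFiniteSupport ((hw d).subset ?_)
  intro i hi
  by_contra h
  simp only [Set.mem_ofPred_eq] at h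
  simp [coeff_X_pow, Ne.symm h] at hi

/-- A sum that changes sign under a permutation of its index set is zero, `2` being invertible
modulo `11`. -/
lemma hasSum_zero_of_neg {ι : Type*} {g : ι → (ZMod 11)⟦X⟧} (hg : Summable g) (e : ι ≃ ι)
    (h : ∀ i, g (e i) = -g i) : HasSum g 0 := by
  obtain ⟨s, hs⟩ := hg
  have h1 : HasSum (fun i => g (e i)) s := e.hasSum_iff.2 hs
  simp only [h] at h1
  have h2 := h1.unique hs.neg
  suffices s = 0 by rwa [this] at hs
  ext n
  have h3 := congrArg (coeff n) h2
  rw [map_neg] at h3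
  rw [map_zero]
  generalize coeff n s = x at h3
  revert x
  decide

/-- The general term of `∑_{a ∈ ℤ} (-1)^a a^i q^(a(a-1)/2)`. -/
def thetaTerm (i : ℕ) (a : ℤ) : (ZMod 11)⟦X⟧ := C (sgn a * (a : ZMod 11) ^ i) * X ^ tri a

lemma summable_thetaTerm (i : ℕ) : Summable (thetaTerm i) :=
  summable_mono _ (fun N => (Set.finite_Icc (-(N : ℤ)) (N + 1)).subset
    fun a (ha : tri a = N) => mem_Icc_of_tri a ha.le) _

/-- The reflection `a ↦ 1 - a` fixes the exponent and flips the sign. -/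
lemma hasSum_thetaTerm_zero : HasSum (thetaTerm 0) 0 := by
  refine hasSum_zero_of_neg (summable_thetaTerm 0) (Equiv.subLeft 1) fun a => ?_
  have h1 : tri (1 - a) = tri a := by
    have := two_mul_tri a
    have := two_mul_tri (1 - a)
    zify; linarith
  have h2 : sgn (1 - a) = -sgn a := sgn_congr_neg ⟨-a, by ring⟩
  simp [thetaTerm, h1, h2]

/-- **Jacobi's identity** for the cube of Euler's product, modulo `11`. -/
lemma hasSum_jacobi : HasSum
    (fun j : ℕ => (-1) ^ j * (2 * (j : (ZMod 11)⟦X⟧) + 1) * X ^ (j * (j + 1) / 2))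
    (pentagonalSeries (ZMod 11) ^ 3) := by
  rw [hasSum_iff_hasSum_coeff]
  intro d
  have h := X_pow_dvd_iff.1 (jacobi_congr (R := ZMod 11) d (d + 1) (by omega)) d (by omega)
  rw [map_sub, sub_eq_zero] at h
  rw [h, map_sum]
  refine hasSum_sum_of_ne_finset_zero fun j hj => ?_
  rw [mem_range] at hj
  have : d < j * (j + 1) / 2 := by
    rw [Nat.lt_iff_add_one_le, Nat.le_div_iff_mul_le two_pos]
    nlinarith
  exact X_pow_dvd_iff.1 (Dvd.intro_left _ rfl) d this

/-- Jacobi's identity as a sum over `ℤ`, the terms `a = j + 1` and `a = -j` being paired. -/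
lemma hasSum_thetaTerm_one : HasSum (thetaTerm 1) (-pentagonalSeries (ZMod 11) ^ 3) := by
  obtain ⟨s, hs⟩ := summable_thetaTerm 1
  have h1 := ((Equiv.addRight (1 : ℤ)).hasSum_iff.2 hs).nat_add_neg_add_one
  have h2 := hasSum_jacobi.neg
  suffices s = -pentagonalSeries (ZMod 11) ^ 3 by rwa [this] at hs
  refine h1.unique ?_
  convert h2 using 1
  · rfl
  funext j
  have t1 : tri ((j : ℤ) + 1) = j * (j + 1) / 2 := by
    unfold tri
    rw [show ((j : ℤ) + 1) * (j + 1 - 1) = ((j * (j + 1) : ℕ) : ℤ) by push_cast; ring]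
    omega
  have t2 : tri (-((j : ℤ) + 1) + 1) = j * (j + 1) / 2 := by
    rw [← t1]
    have := two_mul_tri (-((j : ℤ) + 1) + 1)
    have := two_mul_tri ((j : ℤ) + 1)
    zify; linarith
  have s1 : sgn ((j : ℤ) + 1) = -(-1) ^ j := by
    rw [sgn_congr_neg (b := j) ⟨0, by ring⟩]
    simp [sgn]
  have s2 : sgn (-((j : ℤ) + 1) + 1) = (-1) ^ j := by
    rw [sgn_congr (b := j) ⟨-j, by ring⟩]
    simp [sgn]
  simp only [Function.comp_apply, Equiv.coe_addRight, thetaTerm, t1, t2, s1, s2, map_mul, map_neg,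
    map_pow, map_one, pow_one, Int.cast_add, Int.cast_neg, Int.cast_natCast, Int.cast_one, map_add,
    map_natCast]
  ring

/-- The general term of
`∑_{a,b,c} (-1)^(a+b+c) (a-c)² (b-c) q^(a(a-1)/2 + b(b-1)/2 + c(c-1)/2)`. -/
def tripleTerm (p : (ℤ × ℤ) × ℤ) : (ZMod 11)⟦X⟧ :=
  C (sgn (p.1.1 + p.1.2 + p.2) * (((p.1.1 - p.2) ^ 2 * (p.1.2 - p.2) : ℤ) : ZMod 11)) *
    X ^ (tri p.1.1 + tri p.1.2 + tri p.2)

lemma hasSum_mul_three {A ι : Type*} [CommRing A] [TopologicalSpace A] [IsTopologicalRing A]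
    [T3Space A] {f g h : ι → A} {x y z : A} (hf : HasSum f x) (hg : HasSum g y) (hh : HasSum h z)
    (s2 : Summable fun p : ι × ι => f p.1 * g p.2)
    (s3 : Summable fun p : (ι × ι) × ι => f p.1.1 * g p.1.2 * h p.2) :
    HasSum (fun p : (ι × ι) × ι => f p.1.1 * g p.1.2 * h p.2) (x * y * z) :=
  HasSum.mul (f := fun p : ι × ι => f p.1 * g p.2) (hf.mul hg s2) hh s3

/-- The expansion of `(a-c)² (b-c)` for families `t i a`, playing the role of `a ^ i * t 0 a`, with
sums `T i`: if `T 0 = 0`, only the monomial `-2abc` contributes. -/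
lemma hasSum_expand {A : Type*} [CommRing A] [TopologicalSpace A] [IsTopologicalRing A]
    (t : ℕ → ℤ → A) (T : ℕ → A) (hT : T 0 = 0)
    (key : ∀ i j k, HasSum (fun p : (ℤ × ℤ) × ℤ => t i p.1.1 * t j p.1.2 * t k p.2)
      (T i * T j * T k)) :
    HasSum (fun p : (ℤ × ℤ) × ℤ => t 2 p.1.1 * t 1 p.1.2 * t 0 p.2 - t 2 p.1.1 * t 0 p.1.2 * t 1 p.2
      - 2 * (t 1 p.1.1 * t 1 p.1.2 * t 1 p.2) + 2 * (t 1 p.1.1 * t 0 p.1.2 * t 2 p.2)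
      + t 0 p.1.1 * t 1 p.1.2 * t 2 p.2 - t 0 p.1.1 * t 0 p.1.2 * t 3 p.2) (-2 * T 1 ^ 3) := by
  have h := (((((key 2 1 0).sub (key 2 0 1)).sub ((key 1 1 1).mul_left 2)).add
    ((key 1 0 2).mul_left 2)).add (key 0 1 2)).sub (key 0 0 3)
  have e : T 2 * T 1 * T 0 - T 2 * T 0 * T 1 - 2 * (T 1 * T 1 * T 1) + 2 * (T 1 * T 0 * T 2)
      + T 0 * T 1 * T 2 - T 0 * T 0 * T 3 = -2 * T 1 ^ 3 := by
    rw [hT]; ring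
  rwa [e] at h

/-- Expanding `(a-c)² (b-c)`, every monomial other than `-2abc` omits a variable, and summing over
that variable gives zero. -/
lemma hasSum_tripleTerm : HasSum tripleTerm (2 * pentagonalSeries (ZMod 11) ^ 9) := by
  have prod2 : ∀ i j a b, thetaTerm i a * thetaTerm j b =
      C (sgn (a + b) * (a : ZMod 11) ^ i * (b : ZMod 11) ^ j) * X ^ (tri a + tri b) := by
    intro i j a b
    simp only [thetaTerm, sgn_add, map_mul, pow_add]; ring
  have prod3 : ∀ i j k a b c, thetaTerm i a * thetaTerm j b * thetaTerm k c =
      C (sgn (a + b + c) * (a : ZMod 11) ^ i * (b : ZMod 11) ^ j * (c : ZMod 11) ^ k) *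
        X ^ (tri a + tri b + tri c) := by
    intro i j k a b c
    simp only [thetaTerm, sgn_add, map_mul, pow_add]; ring
  have key : ∀ i j k, HasSum (fun p : (ℤ × ℤ) × ℤ =>
      thetaTerm i p.1.1 * thetaTerm j p.1.2 * thetaTerm k p.2)
      ((∑' a, thetaTerm i a) * (∑' a, thetaTerm j a) * (∑' a, thetaTerm k a)) := by
    intro i j k
    have s2 : Summable fun p : ℤ × ℤ => thetaTerm i p.1 * thetaTerm j p.2 := by
      simp only [prod2]
      refine summable_mono (fun p : ℤ × ℤ => tri p.1 + tri p.2) (fun N => ?_) _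
      refine ((Set.finite_Icc (-(N : ℤ)) (N + 1)).prod
        (Set.finite_Icc (-(N : ℤ)) (N + 1))).subset fun p (hp : tri p.1 + tri p.2 = N) => ?_
      exact ⟨mem_Icc_of_tri _ (by omega), mem_Icc_of_tri _ (by omega)⟩
    have s3 : Summable fun p : (ℤ × ℤ) × ℤ =>
        thetaTerm i p.1.1 * thetaTerm j p.1.2 * thetaTerm k p.2 := by
      simp only [prod3]
      refine summable_mono (fun p : (ℤ × ℤ) × ℤ => tri p.1.1 + tri p.1.2 + tri p.2)
        (fun N => ?_) _
      refine (((Set.finite_Icc (-(N : ℤ)) (N + 1)).prod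
        (Set.finite_Icc (-(N : ℤ)) (N + 1))).prod (Set.finite_Icc (-(N : ℤ)) (N + 1))).subset
        fun p (hp : tri p.1.1 + tri p.1.2 + tri p.2 = N) => ?_
      exact ⟨⟨mem_Icc_of_tri _ (by omega), mem_Icc_of_tri _ (by omega)⟩,
        mem_Icc_of_tri _ (by omega)⟩
    exact hasSum_mul_three (summable_thetaTerm i).hasSum (summable_thetaTerm j).hasSum
      (summable_thetaTerm k).hasSum s2 s3
  have h := hasSum_expand thetaTerm (fun i => ∑' a, thetaTerm i a) hasSum_thetaTerm_zero.tsum_eq key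
  have e : -2 * (∑' a, thetaTerm 1 a) ^ 3 = 2 * pentagonalSeries (ZMod 11) ^ 9 := by
    rw [hasSum_thetaTerm_one.tsum_eq]; ring
  simp only [e] at h
  refine (funext fun ⟨⟨a, b⟩, c⟩ => ?_ : tripleTerm = _) ▸ h
  simp only [prod3, tripleTerm]
  push_cast
  simp only [map_mul, map_pow, map_sub]
  ring

/-- The fiber of the triple sum over fixed differences `i = a - c`, `j = b - c` is zero or a
monomial times Euler's product, by the pentagonal number theorem.  The exponent `E` of the monomial
satisfies `3 E + 1 = i² - i j + j²`, and `11` is inert in `ℤ[ω]`, so `E ≡ 7` modulo `11` forces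
`11 ∣ i, j` and hence kills the coefficient `i² j`. -/
lemma fiber (i j : ℤ) : ∃ H : (ZMod 11)⟦X⟧,
    HasSum (fun c => tripleTerm ((i + c, j + c), c)) (H * pentagonalSeries (ZMod 11)) ∧
    ∀ (g : (ZMod 11)⟦X⟧) (m : ℕ), coeff (11 * m + 7) (H * g ^ 11) = 0 := by
  have mono : ∀ (E : ℕ) (κ : ZMod 11), 3 * (E : ℤ) + 1 = i ^ 2 - i * j + j ^ 2 →
      ∀ (g : (ZMod 11)⟦X⟧) (m : ℕ),
        coeff (11 * m + 7) (C (κ * ((i ^ 2 * j : ℤ) : ZMod 11)) * X ^ E * g ^ 11) = 0 := by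
    intro E κ hE g m
    rw [mul_assoc, coeff_C_mul, coeff_X_pow_mul']
    split_ifs with h
    · by_cases h7 : (11 * m + 7 - E) % 11 = 0
      · have hz : ∀ x y : ZMod 11, x ^ 2 - x * y + y ^ 2 = 0 → x ^ 2 * y = 0 := by decide
        have : ((i ^ 2 * j : ℤ) : ZMod 11) = 0 := by
          push_cast
          apply hz
          have : ((i ^ 2 - i * j + j ^ 2 : ℤ) : ZMod 11) = 0 := by
            rw [← hE, ZMod.intCast_zmod_eq_zero_iff_dvd]
            omega
          exact_mod_cast this
        rw [this]; ring
      · rw [coeff_pow_eleven _ _ h7, mul_zero]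
    · exact mul_zero _
  have exE : ∀ E' : ℤ, 3 * E' + 1 = i ^ 2 - i * j + j ^ 2 →
      ∃ E : ℕ, 3 * (E : ℤ) + 1 = i ^ 2 - i * j + j ^ 2 := by
    intro E' h
    refine ⟨E'.toNat, ?_⟩
    have : 0 ≤ i ^ 2 - i * j + j ^ 2 := by nlinarith [sq_nonneg (i - j), sq_nonneg (i + j)]
    omega
  have hpent := hasSum_pentagonalSeries (ZMod 11)
  obtain ⟨k, hk | hk | hk⟩ : ∃ k, i + j = 3 * k ∨ i + j = 3 * k + 1 ∨ i + j = 3 * k + 2 :=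
    ⟨(i + j) / 3, by omega⟩
  · -- Here the inner theta series vanishes, by the reflection `c ↦ 1 - 2k - c`.
    refine ⟨0, ?_, by simp⟩
    rw [zero_mul]
    refine hasSum_zero_of_neg ?_ (Equiv.subLeft (1 - 2 * k)) fun c => ?_
    · refine summable_mono (fun c => tri (i + c) + tri (j + c) + tri c) (fun N => ?_) _
      exact (Set.finite_Icc (-(N : ℤ)) (N + 1)).subset
        fun c (hc : tri (i + c) + tri (j + c) + tri c = N) => mem_Icc_of_tri c (by omega)
    · have hs : sgn (i + (1 - 2 * k - c) + (j + (1 - 2 * k - c)) + (1 - 2 * k - c)) =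
          -sgn (i + c + (j + c) + c) := sgn_congr_neg ⟨1 - 3 * k - 3 * c, by ring⟩
      have ht : tri (i + (1 - 2 * k - c)) + tri (j + (1 - 2 * k - c)) + tri (1 - 2 * k - c) =
          tri (i + c) + tri (j + c) + tri c := by
        zify
        have := two_mul_tri (i + (1 - 2 * k - c))
        have := two_mul_tri (j + (1 - 2 * k - c))
        have := two_mul_tri (1 - 2 * k - c)
        have := two_mul_tri (i + c)
        have := two_mul_tri (j + c)
        have := two_mul_tri c
        obtain rfl : j = 3 * k - i := by omega
        linarith
      simp only [Equiv.subLeft_apply, tripleTerm, hs, ht,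
        add_sub_cancel_right, neg_mul, map_neg]
  · obtain ⟨E, hE⟩ := exE (3 * k ^ 2 + 2 * k - 3 * i * k - i + i ^ 2)
      (by obtain rfl : j = 3 * k + 1 - i := by omega
          ring)
    refine ⟨C (-1 * ((i ^ 2 * j : ℤ) : ZMod 11)) * X ^ E, ?_, mono E _ hE⟩
    -- Completing the square: `c - k` turns the exponent into a pentagonal number plus `E`.
    rw [← (Equiv.subRight k).hasSum_iff]
    convert hpent.mul_left _ using 1
    · rfl
    funext c
    have hs : sgn (i + (c - k) + (j + (c - k)) + (c - k)) = -sgn c :=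
      sgn_congr_neg ⟨c, by linear_combination hk⟩
    have ht : tri (i + (c - k)) + tri (j + (c - k)) + tri (c - k) = E + pentagonal c := by
      zify
      have := two_mul_tri (i + (c - k))
      have := two_mul_tri (j + (c - k))
      have := two_mul_tri (c - k)
      have := two_mul_natCast_pentagonal c
      obtain rfl : j = 3 * k + 1 - i := by omega
      linarith
    simp only [Function.comp_apply, Equiv.subRight_apply, tripleTerm, hs, ht,
      add_sub_cancel_right]
    simp only [pow_add, map_mul, sgn, map_neg, map_intCast, map_one]
    ring
  · obtain ⟨E, hE⟩ := exE (3 * k ^ 2 + 4 * k + 1 - 3 * i * k - 2 * i + i ^ 2)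
      (by obtain rfl : j = 3 * k + 2 - i := by omega
          ring)
    refine ⟨C (1 * ((i ^ 2 * j : ℤ) : ZMod 11)) * X ^ E, ?_, mono E _ hE⟩
    -- Completing the square, now with the reflection `-k - c`.
    rw [← (Equiv.subLeft (-k)).hasSum_iff]
    convert hpent.mul_left _ using 1
    · rfl
    funext c
    have hs : sgn (i + (-k - c) + (j + (-k - c)) + (-k - c)) = sgn c :=
      sgn_congr ⟨1 - 2 * c, by linear_combination hk⟩
    have ht : tri (i + (-k - c)) + tri (j + (-k - c)) + tri (-k - c) = E + pentagonal c := by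
      zify
      have := two_mul_tri (i + (-k - c))
      have := two_mul_tri (j + (-k - c))
      have := two_mul_tri (-k - c)
      have := two_mul_natCast_pentagonal c
      obtain rfl : j = 3 * k + 2 - i := by omega
      linarith
    simp only [Function.comp_apply, Equiv.subLeft_apply, tripleTerm, hs, ht,
      add_sub_cancel_right]
    simp only [pow_add, map_mul, sgn, map_intCast, map_one]
    ring

/-- Euler: the generating function of partitions is the inverse of Euler's product. -/
lemma numPartitions_mul : PowerSeries.mk (fun n => (numPartitions n : ZMod 11)) *
    pentagonalSeries (ZMod 11) = 1 := by
  have h1 := Nat.Partition.hasProd_powerSeriesMk_card_restricted (ZMod 11) (fun _ => True)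
  have h2 := h1.mul (hasProd_one_sub_X_pow (ZMod 11))
  have h3 : ∀ n, numPartitions n = #(Nat.Partition.restricted n fun _ => True) := by
    intro n
    simp [numPartitions, Nat.Partition.restricted, Nat.card_eq_fintype_card]
  simp only [h3]
  refine h2.unique ?_
  convert hasProd_one using 2 with i
  simp only [if_true, pow_mul]
  exact tsum_pow_mul_one_sub_of_constantCoeff_eq_zero (by simp)

/-- Multiplying the triple sum `2 f ^ 9`, where `f` is Euler's product, by `f⁻¹ ^ 12` turns the left
side into `2 f⁻¹ ^ 3` and each fiber `H f` into `H (f⁻¹) ^ 11`. -/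
lemma p3_dvd (m : ℕ) : 11 ∣ p3 (11 * m + 7) := by
  set P := PowerSeries.mk (fun n => (numPartitions n : ZMod 11)) with hP
  have hPf := numPartitions_mul
  rw [← hP] at hPf
  have hcoeff : coeff (11 * m + 7) (P ^ 3) = (p3 (11 * m + 7) : ZMod 11) := by
    rw [p3_eq_s15, pow_succ', pow_two]
    simp [coeff_mul, hP]
  choose H hH hH0 using fiber
  -- The shear `(i, j, c) ↦ (i + c, j + c, c)`.
  let e : (ℤ × ℤ) × ℤ ≃ (ℤ × ℤ) × ℤ :=
    { toFun := fun p => ((p.1.1 + p.2, p.1.2 + p.2), p.2)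
      invFun := fun p => ((p.1.1 - p.2, p.1.2 - p.2), p.2)
      left_inv := fun p => by simp
      right_inv := fun p => by simp }
  have h1 := (e.hasSum_iff.2 hasSum_tripleTerm).prod_fiberwise (fun ij => hH ij.1 ij.2)
  have h2 := h1.mul_right (P ^ 12)
  have h3 : 2 * pentagonalSeries (ZMod 11) ^ 9 * P ^ 12 = 2 * P ^ 3 := by
    linear_combination 2 * P ^ 3 * congrArg (· ^ 9) hPf
  have h4 : ∀ ij : ℤ × ℤ, H ij.1 ij.2 * pentagonalSeries (ZMod 11) * P ^ 12 =
      H ij.1 ij.2 * P ^ 11 := by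
    intro ij
    linear_combination H ij.1 ij.2 * P ^ 11 * hPf
  simp only [h3, h4] at h2
  have h5 := (hasSum_iff_hasSum_coeff (ZMod 11)).1 h2 (11 * m + 7)
  simp only [hH0] at h5
  have h6 := h5.unique hasSum_zero
  rw [show (2 : (ZMod 11)⟦X⟧) = C 2 from (map_ofNat C 2).symm, coeff_C_mul, hcoeff] at h6
  rw [← ZMod.natCast_eq_zero_iff]
  exact (mul_eq_zero.1 h6).resolve_left (by decide)

end Eleven


theorem stmt15 (J N : ℕ) :
    (11 : ℤ) ∣ MOm2 (11 * J + 10) (11 * N + 7) := by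
  exact main_of_p3 p3_dvd J N
end
end
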